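/- arXiv:1808.06557 — 2 statements merged into one kernel-verified Lean document; each statement's English description precedes it below -/
import Mathlib

section
/- (Terai) Let f be an odd positive integer with f > 2. Then the only solution in positive integers (x,y,z) of the equation (f^2 − 4)^x + (4f)^y = (f^2 + 4)^z is (x,y,z) = (2,2,2). -/
/-!
Write `a = f² - 4` and `c = f² + 4`; for odd `f` both are `≡ 5 (mod 8)` and every prime factor of `c`
is `≡ 1 (mod 4)`. Jacobi symbols modulo `c` show that `x` is even (`x_even`), and the equation
modulo `8` then shows that `z` is odd if `y = 1` and even otherwise (`z_parity`).

*The case `y ≥ 2`.* With `x = 2X` and `z = 2Z` the numbers `(c ^ Z ± a ^ X) / 2` are coprime with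
product `4 ^ (y - 1) f ^ y`, so they are `u ^ y` and `4 ^ (y - 1) v ^ y` with `u v = f` (`split`).
If `y = 2`, size considerations leave `X = Z = 1` (`case_two`). If `y ≥ 3`, Jacobi symbols
modulo `c` and modulo `f - 2` are incompatible (`case_three`).

*The case `y = 1`.* Here `a ^ (2X) + 4f = c ^ z` with `z` odd has to be excluded. Congruences give
`f ≡ 7 (mod 8)`, `f ≥ 191` and `z ≥ 5` (`one_f_large`, `one_z_ge`). In `ℤ[ε]`, `ε² = 1 + fε`, put
`√c = 2ε - f`, `α = ε - 1` (of norm `-f`) and `η = ε²` (a unit of norm `1`). A descent on the elements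
of norm `-f` turns the equation into `√c ^ z = α ηᵐ - ᾱ η̄ᵐ`, with `η` and `η̄` possibly exchanged
(`ring_eq`). Put `k = 2m`. Expanding `(f + √c) ^ k` modulo `c²` yields `24 k ≥ f⁴ - f³` (`m_lower`), and
comparing sizes yields `k ≤ 2z` (`m_upper`).

So `α (-η) ^ k` and `ᾱ`, or the same with `α` and `ᾱ` exchanged, agree to the order `z ≥ k / 2` at `√c`,
where `k` is large and `-η ≡ 1 (mod √c)`. An interpolation determinant refutes this (`no_rep`),
as in the theory of linear forms in two logarithms. Its entries are the values of the functions
`n ^ i g ^ (l n)`, `g = -η`, at the points `n = t + k r`, where `g ^ k` is replaced by the quotient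
of the two numbers. Some minor is nonzero by a zero estimate (`zero_est`); it is divisible by a high
power of `√c`, because iterated differences of `n ^ i g ^ (l n)` are (`dvd_interp_minor`); and the
product of its two real conjugates is too small for that (`interp_false`).
-/

namespace Jes

open scoped NumberTheorySymbols QuadraticAlgebra

/-! ### Jacobi symbols and the parity of the exponents -/

theorem jac_mod {u v : ℤ} {n : ℕ} (h : (n : ℤ) ∣ u - v) : J(u | n) = J(v | n) := by
  apply jacobiSym.mod_left'
  apply Int.ModEq.symm
  rw [Int.modEq_iff_dvd]
  exact h

/-- If all prime factors of `n` are `≡ 1 (mod 4)`, Jacobi symbols modulo `n` do not see signs: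
each prime factor of `n` divides `V - W` or `V + W`, and `-1` is a square modulo that prime. -/
theorem jac_eq {V W : ℤ} (n : ℕ) (hn : n ≠ 0) (hp : ∀ p : ℕ, p.Prime → p ∣ n → p % 4 = 1)
    (h : (n : ℤ) ∣ V ^ 2 - W ^ 2) : J(V | n) = J(W | n) := by
  induction n using induction_on_primes with
  | zero => exact absurd rfl hn
  | one => simp
  | prime_mul p a hpp ih =>
    have ha : a ≠ 0 := by rintro rfl; simp at hn
    have : NeZero a := ⟨ha⟩
    have : NeZero p := ⟨hpp.ne_zero⟩
    rw [jacobiSym.mul_right, jacobiSym.mul_right]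
    have h1 : (p : ℤ) ∣ V ^ 2 - W ^ 2 := by
      refine Dvd.dvd.trans ?_ h; push_cast; exact dvd_mul_right _ _
    have h2 : (a : ℤ) ∣ V ^ 2 - W ^ 2 := by
      refine Dvd.dvd.trans ?_ h; push_cast; exact dvd_mul_left _ _
    have hp4 : p % 4 = 1 := hp p hpp (dvd_mul_right _ _)
    have e2 := ih ha (fun q hq hd => hp q hq (hd.trans (dvd_mul_left _ _))) h2
    have e1 : J(V | p) = J(W | p) := by
      rw [sq_sub_sq] at h1
      have hpi : Prime (p : ℤ) := Nat.prime_iff_prime_int.mp hpp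
      rcases hpi.dvd_or_dvd h1 with h3 | h3
      · have : J(V | p) = J(-W | p) := jac_mod (by simpa using h3)
        rw [this, jacobiSym.neg _ (by rw [Nat.odd_iff]; omega), ZMod.χ₄_nat_one_mod_four hp4, one_mul]
      · exact jac_mod h3
    rw [e1, e2]

theorem jac_two_one {n : ℕ} (h : n % 8 = 1 ∨ n % 8 = 7) : J(2 | n) = 1 := by
  have : Odd n := by rw [Nat.odd_iff]; omega
  rw [jacobiSym.at_two this, ZMod.χ₈_nat_eq_if_mod_eight]
  rw [if_neg (by omega), if_pos h]

theorem jac_two_neg {n : ℕ} (h : n % 8 = 3 ∨ n % 8 = 5) : J(2 | n) = -1 := by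
  have : Odd n := by rw [Nat.odd_iff]; omega
  rw [jacobiSym.at_two this, ZMod.χ₈_nat_eq_if_mod_eight]
  rw [if_neg (by omega), if_neg (by omega)]

theorem jac_eight {n : ℕ} (h : Odd n) : J(8 | n) = J(2 | n) := by
  rw [show (8 : ℤ) = 2 * 4 by norm_num, jacobiSym.mul_left, jacobiSym.at_four h, mul_one]

theorem jac_m1_one {n : ℕ} (h : n % 4 = 1) : J(-1 | n) = 1 := by
  have : Odd n := by rw [Nat.odd_iff]; omega
  rw [jacobiSym.at_neg_one this, ZMod.χ₄_nat_one_mod_four h]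

theorem jac_m1_neg {n : ℕ} (h : n % 4 = 3) : J(-1 | n) = -1 := by
  have : Odd n := by rw [Nat.odd_iff]; omega
  rw [jacobiSym.at_neg_one this, ZMod.χ₄_nat_three_mod_four h]

theorem sq_mod8 {f : ℕ} (hodd : Odd f) : f ^ 2 % 8 = 1 := by
  rw [Nat.odd_iff] at hodd
  have : f % 8 = 1 ∨ f % 8 = 3 ∨ f % 8 = 5 ∨ f % 8 = 7 := by omega
  rcases this with h | h | h | h <;> simp [Nat.pow_mod, h]

theorem c_mod8 {f c : ℕ} (hodd : Odd f) (hc : c = f ^ 2 + 4) : c % 8 = 5 := by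
  have := sq_mod8 hodd; omega

theorem a_mod8 {f a : ℕ} (hodd : Odd f) (ha : a + 4 = f ^ 2) : a % 8 = 5 := by
  have := sq_mod8 hodd; omega

theorem prime_dvd_c {f c : ℕ} (hodd : Odd f) (hc : c = f ^ 2 + 4) (p : ℕ) (hp : p.Prime)
    (h : p ∣ c) : p % 4 = 1 := by
  have := Fact.mk hp
  have hc8 := c_mod8 hodd hc
  have hp2 : p ≠ 2 := by rintro rfl; omega
  have hpo : p % 2 = 1 := Nat.odd_iff.mp (hp.odd_of_ne_two hp2)
  have h3 : p % 4 ≠ 3 := by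
    apply ZMod.mod_four_ne_three_of_sq_eq_neg_sq' (x := (f : ZMod p)) (y := 2)
    · intro h0
      have : ((2 : ℕ) : ZMod p) = 0 := by exact_mod_cast h0
      rw [ZMod.natCast_eq_zero_iff] at this
      exact hp2 ((Nat.prime_dvd_prime_iff_eq hp Nat.prime_two).mp this)
    · have : ((c : ℕ) : ZMod p) = 0 := by rwa [ZMod.natCast_eq_zero_iff]
      rw [hc] at this
      push_cast at this
      linear_combination this
  omega

theorem jac_f_c {f c : ℕ} (hodd : Odd f) (hc : c = f ^ 2 + 4) : J(f | c) = 1 := by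
  have hc8 := c_mod8 hodd hc
  rw [jacobiSym.quadratic_reciprocity_one_mod_four' hodd (by omega),
    jac_mod (v := 4) (by subst hc; push_cast; exact ⟨f, by ring⟩), jacobiSym.at_four hodd]

theorem jac_a_c {f a c : ℕ} (hodd : Odd f) (ha : a + 4 = f ^ 2) (hc : c = f ^ 2 + 4) :
    J(a | c) = -1 := by
  have hc8 := c_mod8 hodd hc
  have hco : Odd c := by rw [Nat.odd_iff]; omega
  have : (c : ℤ) = a + 8 := by push_cast [hc, ← ha]; ring
  rw [jac_mod (v := -1 * 8) (by rw [this]; exact ⟨1, by ring⟩), jacobiSym.mul_left,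
    jac_m1_one (by omega), jac_eight hco, jac_two_neg (by omega)]; rfl

theorem jac_f2_c {f c : ℕ} (hodd : Odd f) (hc : c = f ^ 2 + 4) :
    J((f + 2 : ℤ) | c) = J(2 | f + 2) := by
  have hc8 := c_mod8 hodd hc
  have ho2 : Odd (f + 2) := by rw [Nat.odd_iff] at *; omega
  have := jacobiSym.quadratic_reciprocity_one_mod_four' (a := f + 2) (b := c) ho2 (by omega)
  push_cast at this
  rw [this, jac_mod (v := 8) (by subst hc; push_cast; exact ⟨f - 2, by ring⟩), jac_eight ho2]

theorem jac_c_a {f a c : ℕ} (hodd : Odd f) (ha : a + 4 = f ^ 2) (hc : c = f ^ 2 + 4) :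
    J(c | a) = -1 := by
  have ha8 := a_mod8 hodd ha
  have hao : Odd a := by rw [Nat.odd_iff]; omega
  have : (c : ℤ) = a + 8 := by push_cast [hc, ← ha]; ring
  rw [jac_mod (v := 8) (by rw [this]; exact ⟨1, by ring⟩), jac_eight hao, jac_two_neg (by omega)]

theorem jac_f_a {f a : ℕ} (hodd : Odd f) (ha : a + 4 = f ^ 2) :
    J(f | a) = J(-1 | f) := by
  have ha8 := a_mod8 hodd ha
  have : (a : ℤ) = f ^ 2 - 4 := by
    have : ((a + 4 : ℕ) : ℤ) = f ^ 2 := by rw [ha]; push_cast; rfl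
    push_cast at this; linarith
  rw [jacobiSym.quadratic_reciprocity_one_mod_four' hodd (by omega),
    jac_mod (v := -1 * 4) (by rw [this]; exact ⟨f, by ring⟩), jacobiSym.mul_left,
    jacobiSym.at_four hodd, mul_one]

/-- Modulo `c` the equation reads `a ^ x ≡ -(4f) ^ y`, where `J(a | c) = -1` and `-1`, `4` and `f`
all have Jacobi symbol `1`. -/
theorem x_even {f a c x y z : ℕ} (hodd : Odd f) (ha : a + 4 = f ^ 2) (hc : c = f ^ 2 + 4)
    (hz : 0 < z) (h : a ^ x + (4 * f) ^ y = c ^ z) : Even x := by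
  have hc8 := c_mod8 hodd hc
  have hco : Odd c := by rw [Nat.odd_iff]; omega
  have h1 : J((a : ℤ) ^ x | c) = J(-1 * (4 * f : ℤ) ^ y | c) := by
    apply jac_mod
    have : (a : ℤ) ^ x - -1 * (4 * f : ℤ) ^ y = c ^ z := by
      rw [← Nat.cast_pow c, ← h]; push_cast; ring
    rw [this]; exact dvd_pow_self _ hz.ne'
  rw [jacobiSym.mul_left, jacobiSym.pow_left, jacobiSym.pow_left, jacobiSym.mul_left,
    jac_a_c hodd ha hc, jac_f_c hodd hc, jac_m1_one (by omega), jacobiSym.at_four hco] at h1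
  by_contra hx
  rw [Nat.not_even_iff_odd] at hx
  rw [hx.neg_one_pow] at h1
  norm_num at h1

/-- For even `x` the equation modulo `8` is `1 + (4f) ^ y ≡ 5 ^ z`. -/
theorem z_parity {f a c x y z : ℕ} (hodd : Odd f) (ha : a + 4 = f ^ 2) (hc : c = f ^ 2 + 4)
    (hx : Even x) (h : a ^ x + (4 * f) ^ y = c ^ z) : (y = 1 → Odd z) ∧ (2 ≤ y → Even z) := by
  have hc8 := c_mod8 hodd hc
  have ha8 := a_mod8 hodd ha
  obtain ⟨X, rfl⟩ := hx
  have e1 : a ^ (X + X) % 8 = 1 := by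
    rw [← two_mul, pow_mul, Nat.pow_mod, Nat.pow_mod a, ha8]; simp
  constructor
  · rintro rfl
    by_contra hz
    rw [Nat.not_odd_iff_even] at hz
    obtain ⟨Z, rfl⟩ := hz
    have e2 : c ^ (Z + Z) % 8 = 1 := by
      rw [← two_mul, pow_mul, Nat.pow_mod, Nat.pow_mod c, hc8]; simp
    rw [Nat.odd_iff] at hodd
    rw [pow_one] at h
    omega
  · intro hy
    by_contra hz
    rw [Nat.not_even_iff_odd] at hz
    obtain ⟨Z, rfl⟩ := hz
    have e2 : c ^ (2 * Z + 1) % 8 = 5 := by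
      rw [pow_succ, pow_mul, Nat.mul_mod, Nat.pow_mod, Nat.pow_mod c, hc8]; simp
    obtain ⟨w, rfl⟩ := Nat.exists_eq_add_of_le hy
    have e3 : (4 * f) ^ (2 + w) % 8 = 0 := by
      rw [pow_add, mul_pow]
      apply Nat.mod_eq_zero_of_dvd
      exact Dvd.intro (2 * f ^ 2 * (4 * f) ^ w) (by ring)
    omega

/-! ### The case `y ≥ 2` -/

theorem jac_dvd_c {f c u : ℕ} (hodd : Odd f) (hc : c = f ^ 2 + 4) (hu : u ∣ f) : J(u | c) = 1 := by
  have hc8 := c_mod8 hodd hc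
  have huo : Odd u := Odd.of_dvd_nat hodd hu
  obtain ⟨k, hk⟩ := hu
  rw [jacobiSym.quadratic_reciprocity_one_mod_four' huo (by omega),
    jac_mod (v := 4) (by subst hc hk; push_cast; exact ⟨u * k ^ 2, by ring⟩),
    jacobiSym.at_four huo]

/-- Factor `(4f) ^ y = (c ^ Z - a ^ X) (c ^ Z + a ^ X)`: the halves of the two factors are coprime
and the one with `+` is odd, so each is a `y`-th power up to the factor `4 ^ (y - 1)`. -/
theorem split {f a c X y Z : ℕ} (hodd : Odd f) (ha : a + 4 = f ^ 2) (hc : c = f ^ 2 + 4)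
    (hy : 0 < y) (h : a ^ (2 * X) + (4 * f) ^ y = c ^ (2 * Z)) :
    ∃ u v : ℕ, u * v = f ∧ c ^ Z = u ^ y + 4 ^ (y - 1) * v ^ y ∧
      a ^ X + 4 ^ (y - 1) * v ^ y = u ^ y := by
  have hc8 := c_mod8 hodd hc
  have ha8 := a_mod8 hodd ha
  have hA4 : a ^ X % 4 = 1 := by
    rw [Nat.pow_mod, show a % 4 = 1 by omega]; simp
  have hC4 : c ^ Z % 4 = 1 := by
    rw [Nat.pow_mod, show c % 4 = 1 by omega]; simp
  have hcop : Nat.Coprime (a ^ X) (c ^ Z) := by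
    apply Nat.Coprime.pow
    have : c = a + 8 := by omega
    rw [this, Nat.coprime_self_add_right]
    exact Nat.Coprime.pow_right 3 (by
      rw [Nat.coprime_two_right, Nat.odd_iff]; omega : Nat.Coprime a 2)
  have hlt : a ^ X < c ^ Z := by
    have h0 : 0 < (4 * f) ^ y := by
      have := hodd.pos; positivity
    have : (a ^ X) ^ 2 < (c ^ Z) ^ 2 := by
      rw [← pow_mul, ← pow_mul, mul_comm X, mul_comm Z]; omega
    exact lt_of_pow_lt_pow_left₀ 2 (by positivity) this
  obtain ⟨P, hP⟩ : ∃ P, c ^ Z + a ^ X = 2 * P := ⟨(c ^ Z + a ^ X) / 2, by omega⟩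
  obtain ⟨D, hD⟩ : ∃ D, c ^ Z = a ^ X + 2 * D := ⟨(c ^ Z - a ^ X) / 2, by omega⟩
  have hPD : c ^ Z = P + D := by omega
  have hPD' : P = a ^ X + D := by omega
  have hPo : P % 2 = 1 := by omega
  obtain ⟨w, rfl⟩ : ∃ w, y = w + 1 := ⟨y - 1, by omega⟩
  simp only [Nat.add_sub_cancel]
  have hmul : P * D = 4 ^ w * f ^ (w + 1) := by
    have : (a ^ X) ^ 2 + (4 * f) ^ (w + 1) = (c ^ Z) ^ 2 := by
      rw [← pow_mul, ← pow_mul, mul_comm X, mul_comm Z]; exact h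
    rw [hPD, hPD', mul_pow, pow_succ 4] at this
    rw [hPD']
    nlinarith
  have hcopP : Nat.Coprime P D := by
    rw [hPD, hPD', show a ^ X + D + D = a ^ X + 2 * D by ring, Nat.coprime_self_add_right] at hcop
    rw [hPD', Nat.coprime_add_self_left]
    exact Nat.Coprime.coprime_mul_left_right hcop
  have h4 : Nat.Coprime (4 ^ w) P := by
    apply Nat.Coprime.pow_left
    exact Nat.Coprime.pow_left 2 (by
      rw [Nat.coprime_two_left, Nat.odd_iff]; omega : Nat.Coprime 2 P)
  obtain ⟨D', rfl⟩ : 4 ^ w ∣ D := h4.dvd_of_dvd_mul_left (by rw [hmul]; exact dvd_mul_right _ _)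
  have hmul' : P * D' = f ^ (w + 1) := by
    have h0 : 0 < 4 ^ w := by positivity
    apply Nat.eq_of_mul_eq_mul_left h0
    rw [← hmul]; ring
  have hcop' : Nat.Coprime P D' := Nat.Coprime.coprime_mul_left_right hcopP
  obtain ⟨u, hu⟩ := exists_eq_pow_of_mul_eq_pow (a := P) (b := D') (by
    rw [Nat.isUnit_iff]; exact hcop') hmul'
  obtain ⟨v, hv⟩ := exists_eq_pow_of_mul_eq_pow (a := D') (b := P) (by
    rw [Nat.isUnit_iff]; exact hcop'.symm) (by rw [mul_comm]; exact hmul')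
  subst hu hv
  refine ⟨u, v, ?_, hPD, hPD'.symm⟩
  rw [← mul_pow] at hmul'
  have huv := Nat.pow_left_injective (Nat.succ_ne_zero w) hmul'
  exact huv

/-- For `y = 2`, `c ^ Z = u² + 4 v² ≤ u² v² + 4 = c` because `u² ≥ 4` and `v² ≥ 1`, so that
`Z = 1`; the equation then gives `X = 1`. -/
theorem case_two {f a c X y Z u v : ℕ} (hf : 2 < f) (ha : a + 4 = f ^ 2) (hc : c = f ^ 2 + 4)
    (hZ : 0 < Z) (hy : y = 2)
    (huv : u * v = f) (h1 : c ^ Z = u ^ y + 4 ^ (y - 1) * v ^ y)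
    (h2 : a ^ X + 4 ^ (y - 1) * v ^ y = u ^ y)
    (h : a ^ (2 * X) + (4 * f) ^ y = c ^ (2 * Z)) : X = 1 ∧ Z = 1 := by
  subst hy
  simp only [show 2 - 1 = 1 by rfl, pow_one] at h1 h2
  have ha5 : 1 < a := by nlinarith
  have hv : 0 < v := by
    rcases Nat.eq_zero_or_pos v with h0 | h0
    · subst h0; simp at huv; omega
    · exact h0
  have hu : 2 ≤ u := by
    have : 0 < a ^ X := by positivity
    nlinarith
  have hle : c ^ Z ≤ c ^ 1 := by
    rw [h1, pow_one, hc, ← huv]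
    obtain ⟨s, rfl⟩ := Nat.exists_eq_add_of_le hu
    obtain ⟨t, rfl⟩ := Nat.exists_eq_add_of_le hv
    nlinarith [Nat.zero_le (s * t), Nat.zero_le (s^2 * t), Nat.zero_le (s * t^2), Nat.zero_le (s^2*t^2)]
  have hZ1 : Z ≤ 1 := (Nat.pow_le_pow_iff_right (by nlinarith : 1 < c)).mp hle
  have hZ' : Z = 1 := by omega
  subst hZ'
  refine ⟨?_, rfl⟩
  have : a ^ (2 * X) = a ^ 2 := by
    have : c = a + 8 := by omega
    have e : (4 * f) ^ 2 = 16 * (a + 4) := by rw [ha]; ring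
    rw [e, this] at h
    have e' : (a + 8) ^ (2 * 1) = a ^ 2 + 16 * (a + 4) := by ring
    omega
  have := Nat.pow_right_injective (show 2 ≤ a by omega) this
  omega

/-- Modulo `c`, `a ^ X ≡ 2 u ^ y` shows that `X` is odd, and then reduction modulo `8` shows that
`y` is odd. Modulo `f - 2`, the power `f ^ y ≡ 2 ^ y` is congruent to a square, so `2` is a
quadratic residue in the sense of Jacobi and `f - 2 ≡ ±1 (mod 8)`. Finally
`f ^ y ≡ -(2 ^ (y - 1) v ^ y)² (mod c)` makes the squares of `(f + 2) f ^ ((y - 1) / 2)` and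
`2 ^ (y - 1) f v ^ y` congruent, which gives `J(2 | f + 2) = 1`; but `f + 2 ≡ 3` or `5 (mod 8)`.
-/
theorem case_three {f a c X y Z u v : ℕ} (hodd : Odd f) (hf : 2 < f) (ha : a + 4 = f ^ 2)
    (hc : c = f ^ 2 + 4) (hX : 0 < X) (hZ : 0 < Z) (hy : 3 ≤ y)
    (huv : u * v = f) (h1 : c ^ Z = u ^ y + 4 ^ (y - 1) * v ^ y)
    (h2 : a ^ X + 4 ^ (y - 1) * v ^ y = u ^ y) : False := by
  have hc8 := c_mod8 hodd hc
  have ha8 := a_mod8 hodd ha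
  have hu : u ∣ f := ⟨v, huv.symm⟩
  have hv : v ∣ f := ⟨u, by rw [← huv, mul_comm]⟩
  have h1z : (c : ℤ) ^ Z = u ^ y + 4 ^ (y - 1) * v ^ y := by exact_mod_cast h1
  have h2z : (a : ℤ) ^ X + 4 ^ (y - 1) * v ^ y = u ^ y := by exact_mod_cast h2
  have huvz : (u : ℤ) * v = f := by exact_mod_cast huv
  have hcz : (c : ℤ) = f ^ 2 + 4 := by rw [hc]; push_cast; ring
  have haz : (a : ℤ) = f ^ 2 - 4 := by
    have : ((a + 4 : ℕ) : ℤ) = f ^ 2 := by rw [ha]; push_cast; rfl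
    push_cast at this; linarith
  -- parity of `X`
  have hXo : Odd X := by
    have e : J((a : ℤ) ^ X | c) = J(2 * (u : ℤ) ^ y | c) := by
      apply jac_mod
      rw [show (a : ℤ) ^ X - 2 * u ^ y = - c ^ Z by linarith, dvd_neg]
      exact dvd_pow_self _ hZ.ne'
    rw [jacobiSym.mul_left, jacobiSym.pow_left, jacobiSym.pow_left, jac_a_c hodd ha hc,
      jac_dvd_c hodd hc hu, jac_two_neg (by omega), one_pow, mul_one] at e
    by_contra hx
    rw [Nat.not_odd_iff_even] at hx
    rw [hx.neg_one_pow] at e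
    norm_num at e
  have hyo : Odd y := by
    by_contra hyo
    rw [Nat.not_odd_iff_even] at hyo
    obtain ⟨w, rfl⟩ := hyo
    obtain ⟨k, rfl⟩ := hXo
    have e1 : u ^ (w + w) % 8 = 1 := by
      rw [← two_mul, pow_mul, Nat.pow_mod, sq_mod8 (Odd.of_dvd_nat hodd hu)]; simp
    have e2 : a ^ (2 * k + 1) % 8 = 5 := by
      rw [pow_succ, pow_mul, Nat.mul_mod, Nat.pow_mod, Nat.pow_mod a, ha8]; simp
    have e3 : 4 ^ (w + w - 1) * v ^ (w + w) % 8 = 0 := by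
      obtain ⟨j, hj⟩ : ∃ j, w + w - 1 = 2 + j := ⟨w + w - 3, by omega⟩
      rw [hj, pow_add]
      apply Nat.mod_eq_zero_of_dvd
      exact Dvd.intro (2 * 4 ^ j * v ^ (w + w)) (by ring)
    omega
  have h4 : (4 : ℤ) ^ (y - 1) = (2 ^ (y - 1)) ^ 2 := by
    rw [← pow_mul, mul_comm, pow_mul]; norm_num
  -- modulo `f - 2`
  obtain ⟨d, rfl⟩ : ∃ d, f = d + 2 := ⟨f - 2, by omega⟩
  have hdo : Odd d := by rw [Nat.odd_iff] at *; omega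
  have m1 : J(2 | d) ≠ -1 := by
    intro hm
    have e : J(((d + 2 : ℕ) : ℤ) ^ y | d) = J((2 ^ (y - 1) * v ^ y : ℤ) ^ 2 | d) := by
      apply jac_mod
      have : ((d + 2 : ℕ) : ℤ) ^ y - (2 ^ (y - 1) * v ^ y : ℤ) ^ 2 = a ^ X * v ^ y := by
        rw [← huvz, mul_pow, ← h2z, mul_pow, ← h4]; ring
      rw [this, haz]
      exact ((show (d : ℤ) ∣ ((d + 2 : ℕ) : ℤ) ^ 2 - 4 from ⟨d + 4, by push_cast; ring⟩).trans
        (dvd_pow_self _ hX.ne')).mul_right _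
    rw [jacobiSym.pow_left, jac_mod (v := 2) (by push_cast; simp), hm, hyo.neg_one_pow,
      jacobiSym.pow_left] at e
    nlinarith [sq_nonneg (J((2 ^ (y - 1) * v ^ y : ℤ) | d))]
  have m1' : d % 8 = 1 ∨ d % 8 = 7 := by
    by_contra hd
    rw [Nat.odd_iff] at hdo
    exact m1 (jac_two_neg (by omega))
  -- modulo `f ^ 2 + 4`
  obtain ⟨w, rfl⟩ := hyo
  simp only [Nat.add_sub_cancel] at *
  have e : J((((d + 2 : ℕ) : ℤ) + 2) * ((d + 2 : ℕ) : ℤ) ^ w | c)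
      = J(((d + 2 : ℕ) : ℤ) * (2 ^ (2 * w) * v ^ (2 * w + 1)) | c) := by
    apply jac_eq c (by omega) (prime_dvd_c hodd hc)
    have : (c : ℤ) ∣ ((d + 2 : ℕ) : ℤ) ^ (2 * w + 1) + (2 ^ (2 * w) * v ^ (2 * w + 1)) ^ 2 := by
      have : ((d + 2 : ℕ) : ℤ) ^ (2 * w + 1) + (2 ^ (2 * w) * v ^ (2 * w + 1)) ^ 2
        = c ^ Z * v ^ (2 * w + 1) := by
        rw [← huvz, mul_pow, h1z, mul_pow, ← h4]; ring
      rw [this]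
      exact (dvd_pow_self _ hZ.ne').mul_right _
    obtain ⟨k, hk⟩ := this
    refine ⟨((d + 2 : ℕ) : ℤ) ^ (2 * w) + 4 * k - (2 ^ (2 * w) * v ^ (2 * w + 1)) ^ 2, ?_⟩
    generalize ((d + 2 : ℕ) : ℤ) = F at *
    rw [mul_sub, mul_add, show (c : ℤ) * (4 * k) = 4 * (c * k) by ring, ← hk, hcz]
    ring
  rw [jacobiSym.mul_left, jacobiSym.mul_left, jacobiSym.mul_left, jacobiSym.pow_left,
    jacobiSym.pow_left, jacobiSym.pow_left, jac_f2_c hodd hc, jac_f_c hodd hc,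
    jac_dvd_c hodd hc hv, jac_two_neg (by omega : c % 8 = 3 ∨ c % 8 = 5),
    pow_mul] at e
  have := jac_two_neg (n := d + 2 + 2) (by omega)
  rw [this] at e
  norm_num at e

/-! ### Congruence conditions in the case `y = 1` -/

section
variable {f a c X z : ℕ} (hodd : Odd f) (hf : 2 < f) (ha : a + 4 = f ^ 2)
  (hc : c = f ^ 2 + 4) (hX : 0 < X) (hzo : Odd z) (h : a ^ (2 * X) + 4 * f = c ^ z)
include hodd ha hc hX hzo h

/-- Modulo `a` the equation reads `c ^ z ≡ 4f`, where `J(c | a) = -1` and `J(f | a) = J(-1 | f)`.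
-/
theorem one_f_mod4 : f % 4 = 3 := by
  have hc8 := c_mod8 hodd hc
  have ha8 := a_mod8 hodd ha
  have hao : Odd a := by rw [Nat.odd_iff]; omega
  have hz : (a : ℤ) ^ (2 * X) + 4 * f = c ^ z := by exact_mod_cast h
  have e : J((c : ℤ) ^ z | a) = J(4 * (f : ℤ) | a) := by
    apply jac_mod
    rw [← hz, add_sub_cancel_right]
    exact dvd_pow_self _ (by omega)
  rw [jacobiSym.pow_left, jac_c_a hodd ha hc, hzo.neg_one_pow, jacobiSym.mul_left,
    jacobiSym.at_four hao, one_mul, jac_f_a hodd ha] at e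
  by_contra h3
  rw [jac_m1_one (by rw [Nat.odd_iff] at hodd; omega)] at e
  norm_num at e

omit hX in
/-- The squares of `2 a ^ X` and `f (f + 2)` are congruent modulo `c`; compare Jacobi symbols. -/
theorem one_X : J(2 | f + 2) = - (-1) ^ X := by
  have hc8 := c_mod8 hodd hc
  have ha8 := a_mod8 hodd ha
  have hz : (a : ℤ) ^ (2 * X) + 4 * f = c ^ z := by exact_mod_cast h
  have hcz : (c : ℤ) = f ^ 2 + 4 := by rw [hc]; push_cast; ring
  have e : J(2 * (a : ℤ) ^ X | c) = J((f : ℤ) * (f + 2) | c) := by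
    apply jac_eq c (by omega) (prime_dvd_c hodd hc)
    have : (c : ℤ) ∣ c ^ z := dvd_pow_self _ (by rintro rfl; simp at hzo)
    obtain ⟨k, hk⟩ := this
    refine ⟨4 * k - 4 * f - f ^ 2, ?_⟩
    have : (2 * (a : ℤ) ^ X) ^ 2 = 4 * (c ^ z - 4 * f) := by rw [← hz]; ring
    rw [this, hk, hcz]
    ring
  rw [jacobiSym.mul_left, jacobiSym.mul_left, jacobiSym.pow_left, jac_f2_c hodd hc,
    jac_f_c hodd hc, jac_a_c hodd ha hc, jac_two_neg (by omega : c % 8 = 3 ∨ c % 8 = 5),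
    one_mul, neg_one_mul] at e
  exact e.symm

/-- If `z ≡ 3 (mod 4)`, the equation modulo `16` contradicts the link between `f` modulo `8` and
the parity of `X` supplied by `one_X`. -/
theorem one_z_mod4 : z % 4 = 1 := by
  have h3 := one_f_mod4 hodd ha hc hX hzo h
  have hX := one_X hodd ha hc hzo h
  obtain ⟨k, rfl⟩ := hzo
  have : f % 16 = 3 ∨ f % 16 = 7 ∨ f % 16 = 11 ∨ f % 16 = 15 := by omega
  have hc16 : c % 16 = ((f % 16) ^ 2 + 4) % 16 := by rw [hc]; simp [Nat.add_mod, Nat.pow_mod]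
  have ha16 : (a + 4) % 16 = ((f % 16) ^ 2) % 16 := by rw [ha]; simp [Nat.pow_mod]
  by_contra hzz
  obtain ⟨w, rfl⟩ : ∃ w, k = 2 * w + 1 := ⟨k / 2, by omega⟩
  have e5 : c ^ (2 * (2 * w + 1) + 1) % 16 = (c % 16) ^ 3 % 16 := by
    rw [show 2 * (2 * w + 1) + 1 = 4 * w + 3 by ring, pow_add, pow_mul, Nat.mul_mod,
      Nat.pow_mod, Nat.pow_mod c 4, Nat.pow_mod c 3]
    have : c % 16 = 5 ∨ c % 16 = 13 := by have := c_mod8 hodd hc; omega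
    rcases this with h | h <;> simp [h]
  rcases Nat.even_or_odd X with hX2 | hX2
  · rw [hX2.neg_one_pow] at hX
    have h8 : f % 8 = 3 := by
      by_contra h8
      rw [jac_two_one (by omega)] at hX
      norm_num at hX
    obtain ⟨t, rfl⟩ := hX2
    have e4 : a ^ (2 * (t + t)) % 16 = 1 := by
      rw [show 2 * (t + t) = 4 * t by ring, pow_mul, Nat.pow_mod, Nat.pow_mod a 4]
      have : a % 16 = 5 ∨ a % 16 = 13 := by have := a_mod8 hodd ha; omega
      rcases this with h | h <;> simp [h]
    have : f % 16 = 3 ∨ f % 16 = 11 := by omega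
    rcases this with h | h <;> simp [h] at hc16 ha16 <;> simp [hc16] at e5 <;> omega
  · rw [hX2.neg_one_pow] at hX
    have h8 : f % 8 = 7 := by
      by_contra h8
      rw [jac_two_neg (by omega)] at hX
      norm_num at hX
    obtain ⟨t, rfl⟩ := hX2
    have e4 : a ^ (2 * (2 * t + 1)) % 16 = a ^ 2 % 16 := by
      rw [show 2 * (2 * t + 1) = 4 * t + 2 by ring, pow_add, pow_mul, Nat.mul_mod,
        Nat.pow_mod, Nat.pow_mod a 4]
      have : a % 16 = 5 ∨ a % 16 = 13 := by have := a_mod8 hodd ha; omega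
      rcases this with h | h <;> simp [h, Nat.pow_mod]
    have e6 : a ^ 2 % 16 = (a % 16) ^ 2 % 16 := by simp [Nat.pow_mod]
    have : f % 16 = 7 ∨ f % 16 = 15 := by omega
    have h13 : a % 16 = 13 := by rcases this with h | h <;> simp [h] at ha16 <;> omega
    rw [h13] at e6
    rcases this with h | h <;> simp [h] at hc16 ha16 <;> simp [hc16] at e5 <;> omega

/-- Modulo a prime factor `p` of `f + 2` the equation becomes `8 ^ z = -8`. As `z = 4w + 1`, the
element `8 ^ w` has order `8`. -/
theorem one_prime_f2 (p : ℕ) (hp : p.Prime) (hpf : p ∣ f + 2) : p % 8 = 1 := by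
  have := Fact.mk hp
  have hz4 := one_z_mod4 hodd ha hc hX hzo h
  obtain ⟨w, rfl⟩ : ∃ w, z = 4 * w + 1 := ⟨z / 4, by omega⟩
  have hp2 : p ≠ 2 := by rintro rfl; rw [Nat.odd_iff] at hodd; omega
  have hpo : p % 2 = 1 := Nat.odd_iff.mp (hp.odd_of_ne_two hp2)
  have h20 : (2 : ZMod p) ≠ 0 := by
    intro h0
    have : ((2 : ℕ) : ZMod p) = 0 := by exact_mod_cast h0
    rw [ZMod.natCast_eq_zero_iff] at this
    exact hp2 ((Nat.prime_dvd_prime_iff_eq hp Nat.prime_two).mp this)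
  have hf2 : (f : ZMod p) = -2 := by
    have : ((f + 2 : ℕ) : ZMod p) = 0 := by rwa [ZMod.natCast_eq_zero_iff]
    push_cast at this
    linear_combination this
  have hc' : (c : ZMod p) = 8 := by rw [hc]; push_cast; rw [hf2]; ring
  have ha' : (a : ZMod p) = 0 := by
    have : ((a + 4 : ℕ) : ZMod p) = f ^ 2 := by rw [ha]; push_cast; rfl
    push_cast at this
    rw [hf2] at this
    linear_combination this
  have e : (a : ZMod p) ^ (2 * X) + 4 * f = c ^ (4 * w + 1) := by exact_mod_cast congrArg _ h
  rw [ha', hc', hf2, zero_pow (by omega)] at e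
  have h8 : ((8 : ZMod p) ^ w) ^ 4 = -1 := by
    have h80 : (8 : ZMod p) ≠ 0 := by
      rw [show (8 : ZMod p) = 2 ^ 3 by norm_num]; exact pow_ne_zero _ h20
    apply mul_left_cancel₀ h80
    rw [← pow_mul, mul_comm w, ← pow_succ', ← e]; ring
  have hord : orderOf ((8 : ZMod p) ^ w) = 2 ^ (2 + 1) := by
    apply orderOf_eq_prime_pow
    · norm_num
      rw [h8]
      intro h1
      apply h20
      linear_combination -h1
    · rw [show 2 ^ (2 + 1) = 4 * 2 by norm_num, pow_mul, h8]; norm_num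
  have hne : (8 : ZMod p) ^ w ≠ 0 := by
    intro h0; rw [h0] at h8; norm_num at h8
  have := ZMod.orderOf_dvd_card_sub_one hne
  rw [hord] at this
  obtain ⟨t, ht⟩ := this
  have := hp.pos
  omega

omit hodd hX in
/-- Modulo a prime factor of `f` the equation becomes `4 ^ (2X) = 4 ^ z`, so `2 ^ (2X) = ± 2 ^ z`
with `z` odd; for a prime `≡ 5 (mod 8)` the number `2` is a nonresidue and `-1` is a residue. -/
theorem one_prime_f (p : ℕ) (hp : p.Prime) (hpf : p ∣ f) : p % 8 ≠ 5 := by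
  intro h5
  have e : J((2 : ℤ) ^ (2 * X) | p) = J((2 : ℤ) ^ z | p) := by
    apply jac_eq p hp.ne_zero
    · intro q hq hqp
      rw [(Nat.prime_dvd_prime_iff_eq hq hp).mp hqp]; omega
    · have hf0 : (f : ZMod p) = 0 := by rwa [ZMod.natCast_eq_zero_iff]
      have hc' : (c : ZMod p) = 4 := by rw [hc]; push_cast; rw [hf0]; ring
      have ha' : (a : ZMod p) = -4 := by
        have : ((a + 4 : ℕ) : ZMod p) = f ^ 2 := by rw [ha]; push_cast; rfl
        push_cast at this
        rw [hf0] at this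
        linear_combination this
      have e : (a : ZMod p) ^ (2 * X) + 4 * f = c ^ z := by exact_mod_cast congrArg _ h
      rw [ha', hc', hf0, (even_two_mul X).neg_pow] at e
      rw [← ZMod.intCast_zmod_eq_zero_iff_dvd, ← pow_mul, ← pow_mul, mul_comm _ 2, mul_comm _ 2,
        pow_mul 2 2, pow_mul 2 2]
      push_cast
      linear_combination e
  rw [jacobiSym.pow_left, jacobiSym.pow_left, jac_two_neg (by omega), hzo.neg_one_pow,
    (even_two_mul X).neg_one_pow] at e
  norm_num at e

theorem one_f_mod8 : f % 8 = 7 := by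
  have key : ∀ n : ℕ, n ≠ 0 → (∀ p : ℕ, p.Prime → p ∣ n → p % 8 = 1) → n % 8 = 1 := by
    intro n
    induction n using induction_on_primes with
    | zero => intro h; exact absurd rfl h
    | one => intros; rfl
    | prime_mul p a hp ih =>
      intro hn hall
      have h1 := hall p hp (dvd_mul_right _ _)
      have h2 := ih (by rintro rfl; simp at hn) (fun q hq hd => hall q hq (hd.trans (dvd_mul_left _ _)))
      rw [Nat.mul_mod, h1, h2]
  have := key (f + 2) (by omega) (fun p hp hd => one_prime_f2 hodd ha hc hX hzo h p hp hd)
  omega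

omit hzo in
/-- For `f = 71` the equation modulo `73` is `8 ^ z = -8`, but `8` has order `3` there. -/
theorem one_f_ne : f ≠ 71 := by
  rintro rfl
  have hc' : (c : ZMod 73) = 8 := by rw [hc]; push_cast; decide
  have ha' : (a : ZMod 73) = 0 := by
    have : ((a + 4 : ℕ) : ZMod 73) = 71 ^ 2 := by rw [ha]; push_cast; rfl
    push_cast at this
    have h4 : (71 : ZMod 73) ^ 2 - 4 = 0 := by decide
    linear_combination this + h4
  have e : (a : ZMod 73) ^ (2 * X) + 4 * 71 = c ^ z := by exact_mod_cast congrArg _ h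
  have h0 : (0 : ZMod 73) ^ (2 * X) = 0 := by
    rw [← Nat.succ_pred_eq_of_pos (show 0 < 2 * X by omega), pow_succ, mul_zero]
  rw [ha', hc', h0, zero_add] at e
  have h83 : ∀ k : ℕ, ((8 : ZMod 73) ^ 3) ^ k = 1 := by
    intro k
    rw [show (8 : ZMod 73) ^ 3 = 1 by decide, one_pow]
  have e3 : (8 : ZMod 73) ^ z = 8 ^ (z % 3) := by
    conv_lhs => rw [← Nat.div_add_mod z 3, pow_add, pow_mul, h83, one_mul]
  rw [e3] at e
  have : z % 3 < 3 := Nat.mod_lt _ (by norm_num)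
  interval_cases z % 3 <;> revert e <;> decide

/-- Among `f ≡ 7 (mod 8)` below `191`, only `f = 71` passes the tests `one_prime_f2` and
`one_prime_f` at small primes. -/
theorem one_f_large (hf : 2 < f) : 191 ≤ f := by
  have h8 := one_f_mod8 hodd ha hc hX hzo h
  have h71 := one_f_ne hodd ha hc hX h
  have hA := one_prime_f2 hodd ha hc hX hzo h
  have hB := one_prime_f ha hc hzo h
  clear h ha hc
  by_contra hlt
  obtain ⟨k, rfl⟩ : ∃ k, f = 8 * k + 7 := ⟨f / 8, by omega⟩
  have hk : k < 23 := by omega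
  have A3 := hA 3 (by norm_num)
  have A5 := hA 5 (by norm_num)
  have A7 := hA 7 (by norm_num)
  have A11 := hA 11 (by norm_num)
  have A13 := hA 13 (by norm_num)
  have B5 := hB 5 (by norm_num)
  have B13 := hB 13 (by norm_num)
  have B29 := hB 29 (by norm_num)
  have B37 := hB 37 (by norm_num)
  clear hA hB
  interval_cases k <;> norm_num at *

theorem one_z_ge (hf : 2 < f) : 5 ≤ z := by
  have hz4 := one_z_mod4 hodd ha hc hX hzo h
  by_contra hlt
  have : z = 1 := by omega
  subst this
  have ha5 : 1 < a := by nlinarith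
  have : a ^ 2 ≤ a ^ (2 * X) := Nat.pow_le_pow_right (by omega) (by omega)
  nlinarith

end

/-! ### A lower bound for exponents from a congruence modulo `C²` -/

/-- The pair `(P, Q)` with `(F + √C) ^ k = P + Q √C`. -/
def pq (F C : ℤ) : ℕ → ℤ × ℤ
  | 0 => (1, 0)
  | k + 1 => (F * (pq F C k).1 + C * (pq F C k).2, (pq F C k).1 + F * (pq F C k).2)

/-- The binomial expansions of `P` and `Q` modulo `C²`, multiplied by `6F³` to clear denominators.
-/
theorem pq_mod (F C : ℤ) (k : ℕ) :
    C ^ 2 ∣ 6 * F ^ 3 * (pq F C k).1 - F ^ k * (6 * F ^ 3 + 3 * F * k * (k - 1) * C) ∧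
    C ^ 2 ∣ 6 * F ^ 3 * (pq F C k).2 - F ^ k * (6 * k * F ^ 2 + k * (k - 1) * (k - 2) * C) := by
  induction k with
  | zero => simp [pq]
  | succ k ih =>
    obtain ⟨⟨u, hu⟩, ⟨v, hv⟩⟩ := ih
    have hu' := sub_eq_iff_eq_add.mp hu
    have hv' := sub_eq_iff_eq_add.mp hv
    constructor
    · refine ⟨F * u + C * v + F ^ k * k * (k - 1) * (k - 2), ?_⟩
      simp only [pq]
      push_cast
      linear_combination F * hu + C * hv
    · refine ⟨u + F * v, ?_⟩
      simp only [pq]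
      push_cast
      linear_combination hu + F * hv

/-- Let `κ = σ k`. To first order in `C` the hypothesis says `(F - 2) κ ≡ -F (mod C)`, that is
`4κ = F - 2 + Cτ` for some `τ`. To second order it says `6τ ≡ F (mod C)`, so `|6τ| ≥ C - F`, and
`4k ≥ C |τ| - (F - 2)` has the size of `F⁴ / 6`. -/
theorem k_lower {F C σ : ℤ} {k : ℕ} (hF : 3 ≤ F) (hFo : Odd F) (hC : C = F ^ 2 + 4)
    (hσ : σ = 1 ∨ σ = -1)
    (h : C ^ 2 ∣ (F - 2) * (pq F C k).2 + σ * (pq F C k).1) :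
    F ^ 4 - F ^ 3 ≤ 24 * k := by
  have hσ2 : σ ^ 2 = 1 := by rcases hσ with rfl | rfl <;> norm_num
  obtain ⟨j, hj⟩ := hFo
  have hcop2 : IsCoprime C 2 := by
    refine ⟨1, -(2 * j ^ 2 + 2 * j + 2), ?_⟩
    rw [hC, hj]; ring
  have hcopF : IsCoprime C F := by
    have : IsCoprime F (2 ^ 2) := by
      apply IsCoprime.pow_right
      exact ⟨1, -j, by rw [hj]; ring⟩
    rw [hC, add_comm, show F ^ 2 = F * F by ring]
    simpa using (this.add_mul_left_right F).symm
  have hcop3 : IsCoprime C 3 := by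
    obtain ⟨q, hq | hq | hq⟩ : ∃ q, F = 3 * q ∨ F = 3 * q + 1 ∨ F = 3 * q + 2 := ⟨F / 3, by omega⟩
    · exact ⟨1, -(3 * q ^ 2 + 1), by rw [hC, hq]; ring⟩
    · exact ⟨-1, (3 * q ^ 2 + 2 * q + 2), by rw [hC, hq]; ring⟩
    · exact ⟨-1, (3 * q ^ 2 + 4 * q + 3), by rw [hC, hq]; ring⟩
  have hcop6 : IsCoprime C 6 := by
    rw [show (6 : ℤ) = 2 * 3 by norm_num]; exact hcop2.mul_right hcop3
  obtain ⟨hP, hQ⟩ := pq_mod F C k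
  set P := (pq F C k).1
  set Q := (pq F C k).2
  have hB : C ^ 2 ∣ (F - 2) * (6 * k * F ^ 2 + k * (k - 1) * (k - 2) * C)
      + σ * (6 * F ^ 3 + 3 * F * k * (k - 1) * C) := by
    have h1 : C ^ 2 ∣ F ^ k * ((F - 2) * (6 * k * F ^ 2 + k * (k - 1) * (k - 2) * C)
      + σ * (6 * F ^ 3 + 3 * F * k * (k - 1) * C)) := by
      have := ((h.mul_left (6 * F ^ 3)).sub (hQ.mul_left (F - 2))).sub (hP.mul_left σ)
      refine (this.trans (dvd_of_eq ?_))
      ring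
    exact (hcopF.pow (m := 2) (n := k)).dvd_of_dvd_mul_left h1
  -- `κ` is `σ k`
  obtain ⟨κ, hκ⟩ : ∃ κ : ℤ, κ = σ * k := ⟨_, rfl⟩
  have hk : (k : ℤ) = σ * κ := by rw [hκ, ← mul_assoc, ← sq, hσ2, one_mul]
  obtain ⟨t, ht⟩ := hB
  rw [hk] at ht
  have ht2 : 6 * F ^ 2 * ((F - 2) * κ + F) + C * ((F - 2) * (κ ^ 3 - 3 * σ * κ ^ 2 + 2 * κ)
      + 3 * F * (κ ^ 2 - σ * κ)) = C ^ 2 * (σ * t) := by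
    rcases hσ with rfl | rfl
    · linear_combination ht
    · linear_combination -ht
  clear ht hP hQ h
  have hE : C ∣ (F - 2) * κ + F := by
    have h1 : C ∣ (6 * F ^ 2) * ((F - 2) * κ + F) := ⟨C * (σ * t) - ((F - 2) *
      (κ ^ 3 - 3 * σ * κ ^ 2 + 2 * κ) + 3 * F * (κ ^ 2 - σ * κ)), by linear_combination ht2⟩
    exact (hcop6.mul_right (hcopF.pow_right (n := 2))).dvd_of_dvd_mul_left h1
  have h4κ : C ∣ 4 * κ - (F - 2) := by
    have h1 : C ∣ 2 * (4 * κ - (F - 2)) := by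
      obtain ⟨e, he⟩ := hE
      exact ⟨κ + 1 - (F + 2) * e, by linear_combination -(κ + 1) * hC - (F + 2) * he⟩
    exact hcop2.dvd_of_dvd_mul_left h1
  obtain ⟨τ, hτ⟩ := h4κ
  have hC0 : C ≠ 0 := by rw [hC]; positivity
  have hX : 6 * F ^ 2 * (1 + (F - 2) * τ) + 4 * ((F - 2) * (κ ^ 3 - 3 * σ * κ ^ 2 + 2 * κ)
      + 3 * F * (κ ^ 2 - σ * κ)) = 4 * C * (σ * t) := by
    apply mul_left_cancel₀ hC0
    linear_combination 4 * ht2 - 6 * F ^ 2 * (F - 2) * hτ + 6 * F ^ 2 * hC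
  have h6 : C ∣ 6 * τ - F := by
    obtain ⟨e, he⟩ := hE
    -- modulo `C`: `F ^ 2 = -4`, `4 κ = F - 2`, `(F - 2) κ = -F`
    have h1 : C ∣ 12 * F ^ 2 * (1 + (F - 2) * τ) + 16 * F * (κ ^ 2 - 1) := by
      refine ⟨8 * (σ * t) - 8 * (κ ^ 2 - 3 * σ * κ + 2) * e, ?_⟩
      linear_combination 2 * hX - 8 * (κ ^ 2 - 3 * σ * κ + 2) * he
    have h2 : C ∣ 16 * κ ^ 2 - (F - 2) ^ 2 := ⟨τ * (4 * κ + (F - 2)), by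
      linear_combination (4 * κ + (F - 2)) * hτ⟩
    have h3 : C ∣ 64 * (6 * τ - F) := by
      obtain ⟨p, hp⟩ := h1
      obtain ⟨q, hq⟩ := h2
      obtain ⟨r, hr⟩ : C ∣ F ^ 2 + 4 := ⟨1, by linear_combination -hC⟩
      have h5 : C ∣ 16 * (-2 - F - 3 * (F - 2) * τ) := by
        refine ⟨p - F * q - (12 * (1 + (F - 2) * τ) + (F - 4)) * r, ?_⟩
        linear_combination hp - F * hq - (12 * (1 + (F - 2) * τ) + (F - 4)) * hr
      obtain ⟨w, hw⟩ := h5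
      refine ⟨(F + 2) * w + (48 * τ + 16) * r, ?_⟩
      linear_combination (F + 2) * hw + (48 * τ + 16) * hr
    exact (hcop2.pow_right (n := 6)).dvd_of_dvd_mul_left (by norm_num; exact h3)
  have h6' : C - F ≤ |6 * τ| := by
    obtain ⟨w, hw⟩ := h6
    have hw0 : w ≠ 0 := by
      rintro rfl
      omega
    have h1 : C ≤ |C * w| := by
      rw [abs_mul]
      have h2 : 1 ≤ |w| := Int.one_le_abs hw0
      have h3 : C ≤ |C| := le_abs_self C
      nlinarith [abs_nonneg C]
    rw [← hw] at h1
    have := abs_sub (6 * τ) F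
    rw [abs_of_nonneg (show 0 ≤ F by omega)] at this
    omega
  have hk4 : C * |τ| - (F - 2) ≤ 4 * k := by
    have e1 : C * |τ| = |C * τ| := by rw [abs_mul, abs_of_nonneg (by rw [hC]; positivity : 0 ≤ C)]
    have e2 : |κ| = k := by
      rcases hσ with rfl | rfl <;> simp [hκ]
    rw [e1, ← hτ]
    have := abs_sub (4 * κ) (F - 2)
    rw [abs_mul, e2, abs_of_nonneg (show 0 ≤ F - 2 by omega)] at this
    norm_num at this
    linarith
  rw [abs_mul] at h6'
  norm_num at h6'
  have hCp : 0 ≤ C := by rw [hC]; positivity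
  have := mul_le_mul_of_nonneg_left h6' hCp
  have e : C * (C - F) - 6 * (F - 2) - (F ^ 4 - F ^ 3) = 8 * F ^ 2 - 10 * F + 28 := by rw [hC]; ring
  nlinarith

/-! ### Arithmetic of `ℤ[ε]` with `ε² = 1 + Fε` -/

/-- The order `ℤ[ε]`, `ε² = 1 + Fε`, of discriminant `F² + 4`. -/
abbrev O (F : ℤ) := QuadraticAlgebra ℤ 1 F

/-- `√(F² + 4) = 2ε - F`. -/
def rt (F : ℤ) : O F := ⟨-F, 2⟩
/-- `ε - 1`, an element of norm `-F`. -/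
def al (F : ℤ) : O F := ⟨-1, 1⟩
/-- `ε²`, a unit of norm `1`. -/
def eta (F : ℤ) : O F := ⟨1, F⟩

theorem rt_mul_rt (F : ℤ) : rt F * rt F = ((F ^ 2 + 4 : ℤ) : O F) := by
  obtain ⟨c, hc⟩ : ∃ c, c = F ^ 2 + 4 := ⟨_, rfl⟩
  rw [← hc]
  ext
  · simp [rt]
    linear_combination -hc
  · simp [rt]
    ring

theorem eta_mul_star (F : ℤ) : eta F * star (eta F) = 1 := by
  ext <;> simp [eta] <;> ring

/-- The elements of norm `-F` reached by the descent: `ε - 1` or the negative of its conjugate,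
times a power of `ε²` or of its inverse `star (eta F)`. -/
def Good {F : ℤ} (x : O F) : Prop :=
  ∃ m : ℕ, x = al F * eta F ^ m ∨ x = al F * star (eta F) ^ m ∨
    x = -star (al F) * eta F ^ m ∨ x = -star (al F) * star (eta F) ^ m

/-- `Good` is stable under `x ↦ -x̄`. -/
theorem Good.neg_star {F : ℤ} {x : O F} (h : Good (-star x)) : Good x := by
  obtain ⟨m, h | h | h | h⟩ := h <;> refine ⟨m, ?_⟩ <;>
    have h' := congrArg (fun y => -star y) h <;>
    simp only [star_neg, star_star, neg_neg, star_mul', star_pow, neg_mul] at h' ⊢ <;> simp [h']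

theorem Good.mul_eta {F : ℤ} {x : O F} (h : Good (x * star (eta F))) : Good x := by
  have hx : x = (x * star (eta F)) * eta F := by
    rw [mul_assoc, mul_comm (star _), eta_mul_star, mul_one]
  have key (w : O F) (m : ℕ) : w * star (eta F) ^ (m + 1) * eta F = w * star (eta F) ^ m := by
    rw [pow_succ, mul_assoc, mul_assoc, mul_comm (star _) (eta F), eta_mul_star, mul_one]
  obtain ⟨m, h | h | h | h⟩ := h
  · refine ⟨m + 1, Or.inl ?_⟩
    rw [hx, h]; ring
  · rcases m with _ | m
    · refine ⟨1, Or.inl ?_⟩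
      rw [hx, h]; ring
    · refine ⟨m, Or.inr (Or.inl ?_)⟩
      rw [hx, h, key]
  · refine ⟨m + 1, Or.inr (Or.inr (Or.inl ?_))⟩
    rw [hx, h]; ring
  · rcases m with _ | m
    · refine ⟨1, Or.inr (Or.inr (Or.inl ?_))⟩
      rw [hx, h]; ring
    · refine ⟨m, Or.inr (Or.inr (Or.inr ?_))⟩
      rw [hx, h, key]

/-- Every element `u + vε` of norm `-F` with `v > 0` is `Good`. Passing to `-x̄`, assume that the
trace `2u + Fv` is positive. Then `u < 0` forces `x = ε - 1`, and `u = 0` is excluded because `F`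
is not a square. If `u > 0`, multiplication by `η̄` replaces `v` by `v - Fu`, which is smaller and
still positive. -/
theorem descent {F : ℤ} (hF : 3 ≤ F) (hsq : ∀ v : ℤ, v ^ 2 ≠ F) (n : ℕ) :
    ∀ u v : ℤ, 0 < v → v = n → u ^ 2 + F * u * v - v ^ 2 = -F → Good (⟨u, v⟩ : O F) := by
  induction n using Nat.strong_induction_on with
  | _ n ih =>
  have core : ∀ u v : ℤ, 0 < v → v = n → u ^ 2 + F * u * v - v ^ 2 = -F → 0 < 2 * u + F * v →
      Good (⟨u, v⟩ : O F) := by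
    intro u v hv hvn h hpos
    rcases lt_trichotomy u 0 with hu | hu | hu
    · have hw1 : 0 ≤ (-u - 1) * (F * v - 1 + u) := by
        apply mul_nonneg (by omega)
        nlinarith
      have hv1 : v = 1 := by
        by_contra hne
        have : 2 ≤ v := by omega
        nlinarith
      subst hv1
      have h0 : (-u - 1) * (F - 1 + u) = 0 := by linear_combination -h
      have : u = -1 := by
        rcases mul_eq_zero.mp h0 with h1 | h1 <;> linarith
      subst this
      exact ⟨0, Or.inl (by simp [al])⟩
    · subst hu
      exact absurd (by linarith) (hsq v)
    · apply Good.mul_eta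
      have hFu : 0 < F * u := by positivity
      have hlt : F * u < v := by
        by_contra hle
        push Not at hle
        nlinarith [sq_nonneg u]
      have e : (⟨u, v⟩ : O F) * star (eta F) = ⟨u * (1 + F ^ 2) - F * v, v - F * u⟩ := by
        ext <;> simp [eta] <;> ring
      rw [e]
      refine ih (v - F * u).toNat (by omega) _ _ (by omega) (by omega) ?_
      linear_combination h
  intro u v hv hvn h
  rcases lt_trichotomy (2 * u + F * v) 0 with hs | hs | hs
  · apply Good.neg_star
    have e : -star (⟨u, v⟩ : O F) = ⟨-(u + F * v), v⟩ := by
      ext <;> simp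
    rw [e]
    refine core _ _ hv hvn ?_ (by linarith)
    linear_combination h
  · exfalso
    have e : (2 * u + F * v) ^ 2 - (F ^ 2 + 4) * v ^ 2 = -4 * F := by linear_combination 4 * h
    rw [hs] at e
    have hv2 : 1 ≤ v ^ 2 := by nlinarith
    nlinarith [mul_le_mul_of_nonneg_left hv2 (by positivity : 0 ≤ F ^ 2 + 4)]
  · exact core u v hv hvn h hs

theorem rt_pow_odd (F : ℤ) (w : ℕ) : rt F ^ (2 * w + 1) = (((F ^ 2 + 4) ^ w : ℤ) : O F) * rt F := by
  rw [pow_succ, pow_mul, pow_two, rt_mul_rt]; push_cast; rfl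

/-- The equation `A² + 4F = C D²` says that `u + Dε` with `2u + FD = A` has norm `-F`, and the
difference of `u + Dε` and its conjugate is `D √C`. -/
theorem ring_eq {F A D : ℤ} {w : ℕ} (hF : 3 ≤ F) (hFo : Odd F) (hsq : ∀ v : ℤ, v ^ 2 ≠ F)
    (hA : Odd A) (hD : D = (F ^ 2 + 4) ^ w) (h : A ^ 2 + 4 * F = (F ^ 2 + 4) * D ^ 2) :
    ∃ m : ℕ, rt F ^ (2 * w + 1) = al F * eta F ^ m - star (al F) * star (eta F) ^ m ∨
      rt F ^ (2 * w + 1) = al F * star (eta F) ^ m - star (al F) * eta F ^ m := by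
  have hDo : Odd D := by
    rw [hD]; apply Odd.pow; exact (hFo.pow).add_even ⟨2, rfl⟩
  have hDp : 0 < D := by rw [hD]; positivity
  obtain ⟨u, hu⟩ : Even (A - F * D) := hA.sub_odd (hFo.mul hDo)
  have hA' : A = 2 * u + F * D := by linarith
  have hn : u ^ 2 + F * u * D - D ^ 2 = -F := by
    rw [hA'] at h; linarith
  have hx : rt F ^ (2 * w + 1) = (⟨u, D⟩ : O F) - star (⟨u, D⟩ : O F) := by
    rw [rt_pow_odd, ← hD]
    ext <;> simp [rt] <;> ring
  obtain ⟨m, h | h | h | h⟩ := descent hF hsq D.toNat u D hDp (by omega) hn <;> refine ⟨m, ?_⟩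
  · left; rw [hx, h]; simp
  · right; rw [hx, h]; simp
  · right; rw [hx, h]; simp; ring
  · left; rw [hx, h]; simp; ring

/-- `4 ^ m η ^ m = (F + √C) ^ (2m)`, because `2ε = F + √C`. -/
theorem eta_pow_pq (F : ℤ) (m : ℕ) : ((4 ^ m : ℤ) : O F) * eta F ^ m =
    ⟨(pq F (F ^ 2 + 4) (2 * m)).1 - F * (pq F (F ^ 2 + 4) (2 * m)).2,
      2 * (pq F (F ^ 2 + 4) (2 * m)).2⟩ := by
  induction m with
  | zero => ext <;> simp [pq]
  | succ m ih =>
    have : ((4 ^ (m + 1) : ℤ) : O F) * eta F ^ (m + 1) =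
      (((4 ^ m : ℤ) : O F) * eta F ^ m) * (4 * eta F) := by push_cast; ring
    rw [this, ih, show 2 * (m + 1) = 2 * m + 1 + 1 by ring]
    simp only [pq]
    have e4 : (4 : O F) * eta F = ⟨4, 4 * F⟩ := by
      ext <;> simp [eta]
    rw [e4]
    ext <;> simp <;> ring

/-- Take `√C`-coefficients, which are divisible by `C²` since `w ≥ 2`, and apply `k_lower` to
`k = 2m`. -/
theorem m_lower {F : ℤ} {w m : ℕ} (hF : 3 ≤ F) (hFo : Odd F) (hw : 2 ≤ w)
    (h : rt F ^ (2 * w + 1) = al F * eta F ^ m - star (al F) * star (eta F) ^ m ∨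
      rt F ^ (2 * w + 1) = al F * star (eta F) ^ m - star (al F) * eta F ^ m) :
    F ^ 4 - F ^ 3 ≤ 24 * (2 * m : ℕ) := by
  have e1 := eta_pow_pq F m
  have e2 := congrArg star e1
  simp only [star_mul', star_pow, star_intCast] at e2
  rw [rt_pow_odd] at h
  obtain ⟨j, rfl⟩ := Nat.exists_eq_add_of_le hw
  obtain ⟨M, hM⟩ : ∃ M, M = (F ^ 2 + 4) ^ (2 + j) := ⟨_, rfl⟩
  obtain ⟨N, hN⟩ : ∃ N : ℤ, N = 4 ^ m := ⟨_, rfl⟩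
  rw [← hM] at h
  rw [← hN] at e1 e2
  set P := (pq F (F ^ 2 + 4) (2 * m)).1 with hP
  set Q := (pq F (F ^ 2 + 4) (2 * m)).2 with hQ
  have hh : ∃ σ : ℤ, (σ = 1 ∨ σ = -1) ∧ (F ^ 2 + 4) ^ 2 ∣ (F - 2) * Q + σ * P := by
    rcases h with h | h
    · refine ⟨1, Or.inl rfl, 4 ^ m * (F ^ 2 + 4) ^ j, ?_⟩
      have h' := congrArg (fun y => ((N : O F) * y).im) h
      simp only [mul_sub] at h'
      rw [mul_left_comm _ (al F), e1, mul_left_comm _ (star (al F)), e2] at h'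
      simp [al, rt] at h'
      rw [hM] at h'
      rw [← hN]
      apply mul_left_cancel₀ (two_ne_zero (α := ℤ))
      linear_combination -h'
    · refine ⟨-1, Or.inr rfl, -(4 ^ m * (F ^ 2 + 4) ^ j), ?_⟩
      have h' := congrArg (fun y => ((N : O F) * y).im) h
      simp only [mul_sub] at h'
      rw [mul_left_comm _ (al F), e2, mul_left_comm _ (star (al F)), e1] at h'
      simp [al, rt] at h'
      rw [hM] at h'
      rw [← hN]
      apply mul_left_cancel₀ (two_ne_zero (α := ℤ))
      linear_combination h'
  obtain ⟨σ, hσ, hd⟩ := hh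
  exact k_lower hF hFo rfl hσ hd

/-- The ring homomorphism `O F → ℝ` sending `ε` to a root `e` of `X² = 1 + F X`. -/
noncomputable def emb (F : ℤ) (e : ℝ) (he : e * e = 1 + F * e) : O F →+* ℝ :=
  (QuadraticAlgebra.lift (R := ℤ) ⟨e, by simpa using he⟩ : O F →ₐ[ℤ] ℝ).toRingHom

theorem emb_apply (F : ℤ) (e : ℝ) (he : e * e = 1 + F * e) (x : O F) :
    emb F e he x = x.re + x.im * e := by
  simp [emb, QuadraticAlgebra.lift]

/-- In the real embedding with `e = ε > 1`, the right side exceeds `e ^ (2m)` in absolute value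
and `√C ≤ e²`. -/
theorem m_upper {F : ℤ} {w m : ℕ} (hF : 3 ≤ F)
    (h : rt F ^ (2 * w + 1) = al F * eta F ^ m - star (al F) * star (eta F) ^ m ∨
      rt F ^ (2 * w + 1) = al F * star (eta F) ^ m - star (al F) * eta F ^ m) :
    m ≤ 2 * w + 1 := by
  have hFr : (3 : ℝ) ≤ F := by exact_mod_cast hF
  set r : ℝ := √(F ^ 2 + 4) with hr
  have hr2 : r ^ 2 = F ^ 2 + 4 := Real.sq_sqrt (by positivity)
  have hrp : 0 ≤ r := Real.sqrt_nonneg _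
  have hrF : F ≤ r := by nlinarith
  set e : ℝ := (F + r) / 2 with hedef
  have he : e * e = 1 + F * e := by rw [hedef]; linear_combination hr2 / 4
  have he3 : 3 ≤ e := by rw [hedef]; linarith
  have hs : emb F e he (rt F) = r := by rw [emb_apply]; simp [rt, hedef]; ring
  have hη : emb F e he (eta F) = e ^ 2 := by rw [emb_apply]; simp [eta]; linarith
  have hη' : emb F e he (star (eta F)) = (e ^ 2)⁻¹ := by
    apply eq_inv_of_mul_eq_one_left
    rw [← hη, ← map_mul, mul_comm, eta_mul_star, map_one]
  have hα : emb F e he (al F) = e - 1 := by rw [emb_apply]; simp [al]; ring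
  have hα' : emb F e he (star (al F)) ≤ -1 := by
    rw [emb_apply]; simp [al]; nlinarith
  have hre : r ≤ e ^ 2 := by nlinarith
  have hpow : (e ^ 2) ^ m ≤ r ^ (2 * w + 1) := by
    have hp1 : 0 < (e ^ 2) ^ m := by positivity
    have hp2 : 0 < ((e ^ 2)⁻¹) ^ m := by positivity
    rcases h with h | h
    · have := congrArg (emb F e he) h
      simp only [map_pow, map_sub, map_mul, hs, hη, hη', hα] at this
      rw [this]; nlinarith
    · have := congrArg (emb F e he) h
      simp only [map_pow, map_sub, map_mul, hs, hη, hη', hα] at this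
      rw [this]; nlinarith
  have := hpow.trans (pow_le_pow_left₀ hrp hre _)
  exact (pow_le_pow_iff_right₀ (by nlinarith)).mp this

/-! ### The zero estimate -/

open Polynomial in
/-- The Casorati determinant of the functions `P_j(n) x_j ^ n`, without the factors `x_j ^ n`, is
a nonzero polynomial: after division of its columns by `P_j` it tends to a Vandermonde determinant
at infinity. -/
theorem det_shift_ne {h : ℕ} (P : Fin h → ℝ[X]) (hP : ∀ j, P j ≠ 0) (x : Fin h → ℝ)
    (hx : Function.Injective x) :
    (Matrix.of fun m j : Fin h => (P j).comp (X + C ((m : ℕ) : ℝ)) * C (x j ^ (m : ℕ))).det ≠ 0 := by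
  intro h0
  have hlim : ∀ m j : Fin h, Filter.Tendsto (fun t : ℝ =>
      ((P j).comp (X + C ((m : ℕ) : ℝ)) * C (x j ^ (m : ℕ))).eval t / (P j).eval t)
      Filter.atTop (nhds (x j ^ (m : ℕ))) := by
    intro m j
    have hd : ((P j).comp (X + C ((m : ℕ) : ℝ))).degree = (P j).degree := by
      rw [degree_eq_natDegree (hP j), degree_eq_natDegree, natDegree_comp, natDegree_X_add_C,
        mul_one]
      · intro h1
        have := (comp_eq_zero_iff).1 h1
        rcases this with h2 | ⟨_, h2⟩
        · exact hP j h2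
        · have := congrArg natDegree h2
          rw [natDegree_X_add_C, natDegree_C] at this
          omega
    have h1 := div_tendsto_atTop_leadingCoeff_div_of_degree_eq _ _ hd
    have hlc : ((P j).comp (X + C ((m : ℕ) : ℝ))).leadingCoeff = (P j).leadingCoeff := by
      rw [leadingCoeff_comp (by rw [natDegree_X_add_C]; simp), leadingCoeff_X_add_C, one_pow, mul_one]
    rw [hlc, div_self (leadingCoeff_ne_zero.2 (hP j))] at h1
    have h2 := h1.mul_const (x j ^ (m : ℕ))
    rw [one_mul] at h2
    refine h2.congr fun t => ?_
    rw [eval_mul, eval_C]; ring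
  have hdet : Filter.Tendsto (fun t : ℝ => (Matrix.of fun m j : Fin h =>
      ((P j).comp (X + C ((m : ℕ) : ℝ)) * C (x j ^ (m : ℕ))).eval t / (P j).eval t).det)
      Filter.atTop (nhds (Matrix.of fun m j : Fin h => x j ^ (m : ℕ)).det) := by
    have hc : Continuous (fun A : Matrix (Fin h) (Fin h) ℝ => A.det) := continuous_id.matrix_det
    refine (hc.tendsto _).comp ?_
    refine tendsto_pi_nhds.2 fun m => tendsto_pi_nhds.2 fun j => hlim m j
  have hz : ∀ t : ℝ, (Matrix.of fun m j : Fin h =>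
      ((P j).comp (X + C ((m : ℕ) : ℝ)) * C (x j ^ (m : ℕ))).eval t / (P j).eval t).det = 0 := by
    intro t
    have h1 := congrArg (eval t) h0
    rw [← coe_evalRingHom, RingHom.map_det, map_zero] at h1
    have h2 := Matrix.det_mul_row (fun j => ((P j).eval t)⁻¹) ((evalRingHom t).mapMatrix
      (Matrix.of fun m j : Fin h => (P j).comp (X + C ((m : ℕ) : ℝ)) * C (x j ^ (m : ℕ))))
    rw [h1, mul_zero] at h2
    rw [← h2]
    congr 1
    ext m j
    simp [div_eq_inv_mul]
  have hlim0 := tendsto_nhds_unique hdet (by simp only [hz]; exact tendsto_const_nhds)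
  have hv : (Matrix.of fun m j : Fin h => x j ^ (m : ℕ)) = (Matrix.vandermonde x).transpose := by
    ext m j; simp [Matrix.vandermonde]
  rw [hv, Matrix.det_transpose] at hlim0
  exact Matrix.det_vandermonde_ne_zero_iff.2 hx hlim0

open Polynomial in
/-- Zero estimate: a combination of the functions `n ^ i (g ^ t θ ^ r) ^ l`, `n = t + k r`, that
vanishes for all `r < R` and `t < S` is trivial. If `P_l(n)` collects the terms with a given `l`
and `h ≤ L` of these polynomials are nonzero, vanishing at `h` consecutive values of `t` makes the
determinant of `det_shift_ne` vanish at `n`. This nonzero polynomial has degree at most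
`h (K - 1)`, and there are `R (S - L + 1)` such `n`, distinct because `S ≤ k`. -/
theorem zero_est (K L R S k : ℕ) (g θ : ℝ) (hg : 1 < |g|) (hθ : θ ≠ 0) (hSk : S ≤ k)
    (hLS : L ≤ S) (hcount : (K - 1) * L < R * (S - L + 1)) (p : Fin K × Fin L → ℝ)
    (hp : ∀ r < R, ∀ t < S,
      ∑ q, p q * ((t + k * r : ℕ) : ℝ) ^ (q.1 : ℕ) * (g ^ t * θ ^ r) ^ (q.2 : ℕ) = 0) : p = 0 := by
  classical
  have hg0 : g ≠ 0 := by intro h; rw [h, abs_zero] at hg; linarith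
  set P : Fin L → ℝ[X] := fun l => ∑ i : Fin K, C (p (i, l)) * X ^ (i : ℕ) with hPdef
  have hPe : ∀ l (s : ℝ), (P l).eval s = ∑ i : Fin K, p (i, l) * s ^ (i : ℕ) := by
    intro l s; simp [hPdef, eval_finsetSum]
  have hPdeg : ∀ l, (P l).natDegree ≤ K - 1 := by
    intro l
    refine natDegree_sum_le_of_forall_le _ _ fun i _ => ?_
    exact (natDegree_C_mul_X_pow_le _ _).trans (by omega)
  have hPc : ∀ l (i : Fin K), (P l).coeff i = p (i, l) := by
    intro l i
    simp only [hPdef, finsetSum_coeff, coeff_C_mul, coeff_X_pow]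
    rw [Finset.sum_eq_single i]
    · simp
    · intro j _ hj
      have : (i : ℕ) ≠ j := fun h => hj (Fin.ext h.symm)
      simp [this]
    · simp
  by_contra hne
  set I : Finset (Fin L) := Finset.univ.filter fun l => P l ≠ 0 with hI
  have hIne : I.Nonempty := by
    by_contra hemp
    rw [Finset.not_nonempty_iff_eq_empty] at hemp
    apply hne
    funext ⟨i, l⟩
    have : P l = 0 := by
      by_contra h
      have : l ∈ I := by simp [hI, h]
      rw [hemp] at this; simp at this
    rw [← hPc l i, this]; simp
  obtain ⟨h, hh⟩ : ∃ h, I.card = h := ⟨_, rfl⟩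
  have hh0 : 0 < h := hh ▸ hIne.card_pos
  have hhL : h ≤ L := by
    rw [← hh]; simpa using Finset.card_le_univ I
  set lam : Fin h → Fin L := fun j => I.orderEmbOfFin hh j with hlam
  have hlinj : Function.Injective lam := (I.orderEmbOfFin hh).injective
  have hlmem : ∀ j, P (lam j) ≠ 0 := by
    intro j
    exact (Finset.mem_filter.1 (I.orderEmbOfFin_mem hh j)).2
  have hsum : ∀ (F : Fin L → ℝ), (∀ l, P l = 0 → F l = 0) → ∑ j, F (lam j) = ∑ l, F l := by
    intro F hF
    have himg : Finset.univ.image lam = I := by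
      simp [hlam]
    rw [← Finset.sum_image (f := F) (fun _ _ _ _ e => hlinj e), himg]
    refine Finset.sum_subset (Finset.subset_univ _) fun l _ hl => hF l ?_
    by_contra h; exact hl (by simp [hI, h])
  set W : Matrix (Fin h) (Fin h) ℝ[X] := Matrix.of fun m j : Fin h =>
    (P (lam j)).comp (X + C ((m : ℕ) : ℝ)) * C ((g ^ (lam j : ℕ)) ^ (m : ℕ)) with hW
  have hW0 : W.det ≠ 0 := by
    refine det_shift_ne (fun j => P (lam j)) hlmem (fun j => g ^ (lam j : ℕ)) ?_
    intro a b hab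
    apply hlinj
    apply Fin.ext
    have := congrArg abs hab
    simp only [abs_pow] at this
    exact (pow_right_injective₀ (by linarith) hg.ne') this
  apply hW0
  have hdeg : W.det.natDegree ≤ h * (K - 1) := by
    rw [Matrix.det_apply]
    refine natDegree_sum_le_of_forall_le _ _ fun σ _ => ?_
    refine (natDegree_smul_le _ _).trans ?_
    refine (natDegree_prod_le _ _).trans ?_
    refine (Finset.sum_le_card_nsmul _ _ (K - 1) fun i _ => ?_).trans (by simp)
    rw [hW, Matrix.of_apply]
    refine (natDegree_mul_C_le _ _).trans ?_
    rw [natDegree_comp, natDegree_X_add_C, mul_one]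
    exact hPdeg _
  refine Polynomial.eq_zero_of_natDegree_lt_card_of_eval_eq_zero W.det
    (ι := Fin R × Fin (S - L + 1)) (f := fun rt => ((rt.2 + k * rt.1 : ℕ) : ℝ)) ?_ ?_ ?_
  · rintro ⟨r, t⟩ ⟨r', t'⟩ hrt
    simp only [Nat.cast_inj] at hrt
    have h1 : (t : ℕ) < k := by have := t.2; omega
    have h2 : (t' : ℕ) < k := by have := t'.2; omega
    have e1 : (t : ℕ) = t' := by
      have := congrArg (· % k) hrt
      simpa [Nat.add_mul_mod_self_left, Nat.mod_eq_of_lt h1, Nat.mod_eq_of_lt h2] using this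
    have e2 : (r : ℕ) = r' := by
      rw [e1] at hrt
      exact Nat.eq_of_mul_eq_mul_left (by omega : 0 < k) (by omega)
    exact Prod.ext (Fin.ext e2) (Fin.ext e1)
  · rintro ⟨r, t⟩
    dsimp only
    rw [← coe_evalRingHom, RingHom.map_det]
    apply Matrix.exists_mulVec_eq_zero_iff.1
    refine ⟨fun j => (g ^ (t : ℕ) * θ ^ (r : ℕ)) ^ (lam j : ℕ), ?_, ?_⟩
    · intro h0
      have := congrFun h0 ⟨0, hh0⟩
      have h2 : g ^ (t : ℕ) * θ ^ (r : ℕ) ≠ 0 := by positivity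
      exact pow_ne_zero _ h2 this
    · funext m
      simp only [Matrix.mulVec, dotProduct, RingHom.mapMatrix_apply, Matrix.map_apply, hW,
        Matrix.of_apply, coe_evalRingHom, eval_mul, eval_comp, eval_add, eval_X, eval_C,
        Pi.zero_apply]
      have ht : (t : ℕ) + m < S := by have := t.2; have := m.2; omega
      have := hp r r.2 (t + m) ht
      rw [Fintype.sum_prod_type_right] at this
      rw [← this]
      rw [← hsum (fun l => ∑ i : Fin K, p (i, l) * ((t + m + k * r : ℕ) : ℝ) ^ (i : ℕ)
        * (g ^ ((t : ℕ) + m) * θ ^ (r : ℕ)) ^ (l : ℕ))]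
      · refine Finset.sum_congr rfl fun j _ => ?_
        rw [← Finset.sum_mul, ← hPe, pow_add]
        push_cast
        rw [show (t : ℝ) + k * r + m = t + m + k * r by ring]
        ring
      · intro l hl
        rw [← Finset.sum_mul, ← hPe, hl]; simp
  · rw [Fintype.card_prod, Fintype.card_fin, Fintype.card_fin]
    calc W.det.natDegree ≤ h * (K - 1) := hdeg
      _ ≤ L * (K - 1) := Nat.mul_le_mul_right _ hhL
      _ = (K - 1) * L := mul_comm _ _
      _ < _ := hcount

/-! ### Minors and bounds for determinants -/

theorem exists_minor {ι κ : Type} [Fintype ι] [DecidableEq ι] [Fintype κ] (M : Matrix ι κ ℝ)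
    (h : ∀ p, Matrix.vecMul p M = 0 → p = 0) :
    ∃ q : ι → κ, Function.Injective q ∧ (M.submatrix id q).det ≠ 0 := by
  have hrow : LinearIndependent ℝ M.row := by
    rw [← Matrix.vecMul_injective_iff]
    intro a b hab
    have := h (a - b) (by rw [Matrix.sub_vecMul]; exact sub_eq_zero.2 hab)
    exact sub_eq_zero.1 this
  have hrank := hrow.rank_matrix
  rw [Matrix.rank_eq_finrank_span_cols] at hrank
  obtain ⟨κ', a, ha, hspan, hli⟩ := exists_linearIndependent' ℝ M.col
  have : Fintype κ' := Fintype.ofInjective a ha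
  have hcard := finrank_span_eq_card hli
  rw [hspan, hrank] at hcard
  let e := Fintype.equivOfCardEq hcard
  refine ⟨a ∘ e, ha.comp e.injective, ?_⟩
  have h1 : LinearIndependent ℝ (M.submatrix id (a ∘ e)).col := by
    exact hli.comp e e.injective
  rw [Matrix.linearIndependent_cols_iff_isUnit, Matrix.isUnit_iff_isUnit_det] at h1
  exact h1.ne_zero

theorem abs_det_le {ι : Type} [Fintype ι] [DecidableEq ι] (M : Matrix ι ι ℝ) (a b : ι → ℝ)
    (h : ∀ i j, |M i j| ≤ a i * b j) :
    |M.det| ≤ (Fintype.card ι).factorial * ((∏ i, a i) * ∏ j, b j) := by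
  rw [Matrix.det_apply']
  refine (Finset.abs_sum_le_sum_abs _ _).trans ?_
  refine (Finset.sum_le_card_nsmul _ _ ((∏ i, a i) * ∏ j, b j) fun σ _ => ?_).trans ?_
  · rw [abs_mul, Finset.abs_prod, abs_unit_intCast, one_mul]
    refine (Finset.prod_le_prod (fun _ _ => abs_nonneg _) fun i _ => h (σ i) i).trans ?_
    rw [Finset.prod_mul_distrib, Equiv.prod_comp σ a]
  · rw [Finset.card_univ, Fintype.card_perm, nsmul_eq_mul]

theorem sum_range_le_of_inj {ι : Type} [Fintype ι] (r : ι → ℕ) (hr : Function.Injective r) :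
    ∑ i ∈ Finset.range (Fintype.card ι), i ≤ ∑ i, r i := by
  classical
  have key : ∀ s : Finset ℕ, ∑ i ∈ Finset.range s.card, i ≤ ∑ i ∈ s, i := by
    intro s
    induction s using Finset.induction_on_max with
    | empty => simp
    | insert a s hs ih =>
      have ha : a ∉ s := fun h => lt_irrefl _ (hs a h)
      have hc : s.card ≤ a := by
        simpa using Finset.card_le_card (fun x hx => Finset.mem_range.2 (hs x hx) : s ⊆ Finset.range a)
      rw [Finset.card_insert_of_notMem ha, Finset.sum_range_succ, Finset.sum_insert ha]
      omega
  have := key (Finset.univ.image r)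
  rwa [Finset.card_image_of_injective _ hr, Finset.card_univ,
    Finset.sum_image fun _ _ _ _ e => hr e] at this

/-! ### Divisibility of interpolation determinants -/

section

variable {A : Type} [CommRing A]

theorem fwd_succ (φ : ℕ → A) (m n : ℕ) :
    (fwdDiff 1)^[m + 1] φ n = (fwdDiff 1)^[m] φ (n + 1) - (fwdDiff 1)^[m] φ n := by
  rw [Function.iterate_succ_apply', fwdDiff]

/-- The Leibniz rule for iterated differences of `n φ(n)`. -/
theorem fwd_mul (φ : ℕ → A) (m : ℕ) : ∀ n : ℕ, (fwdDiff 1)^[m + 1] (fun n : ℕ => (n : A) * φ n) n =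
    n * (fwdDiff 1)^[m + 1] φ n + (m + 1 : ℕ) * (fwdDiff 1)^[m] φ (n + 1) := by
  induction m with
  | zero => intro n; simp [fwdDiff]; ring
  | succ m ih =>
    intro n
    rw [fwd_succ, ih, ih, fwd_succ φ (m + 1), fwd_succ φ m (n + 1)]
    push_cast; ring

/-- Every `m`-th forward difference of `φ` is divisible by `s ^ (m - i)`. The subtraction is
truncated, so nothing is required for `m ≤ i`. -/
def FlatTo (s : A) (i : ℕ) (φ : ℕ → A) : Prop := ∀ m n : ℕ, s ^ (m - i) ∣ (fwdDiff 1)^[m] φ n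

theorem FlatTo.mul_id {s : A} {i : ℕ} {φ : ℕ → A} (h : FlatTo s i φ) :
    FlatTo s (i + 1) (fun n => (n : A) * φ n) := by
  intro m n
  cases m with
  | zero => simp
  | succ m =>
    rw [fwd_mul]
    refine dvd_add (Dvd.dvd.mul_left ((pow_dvd_pow s (by omega)).trans (h (m + 1) n)) _)
      (Dvd.dvd.mul_left ((pow_dvd_pow s (by omega)).trans (h m (n + 1))) _)

theorem flatTo_geom {s x : A} (h : s ∣ x - 1) : FlatTo s 0 (fun n => x ^ n) := by
  have key : ∀ m n : ℕ, (fwdDiff 1)^[m] (fun n : ℕ => x ^ n) n = (x - 1) ^ m * x ^ n := by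
    intro m
    induction m with
    | zero => intro n; simp
    | succ m ih => intro n; rw [fwd_succ, ih, ih]; ring
  intro m n
  rw [key]
  exact Dvd.dvd.mul_right (pow_dvd_pow_of_dvd h m) _

theorem flatTo_pow_geom {s x : A} (h : s ∣ x - 1) (i : ℕ) :
    FlatTo s i (fun n => (n : A) ^ i * x ^ n) := by
  induction i with
  | zero => simpa using flatTo_geom h
  | succ i ih =>
    have := ih.mul_id
    simpa only [pow_succ', mul_assoc] using this

/-- Expand every row in the Newton basis, `φ i n = ∑ₘ Δᵐ(φ i)(0) * n.choose m`, and use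
multilinearity. Only injective choices `r` of Newton indices contribute, their coefficients are
divisible by `s ^ ∑ (r i - d i)`, and `∑ r i ≥ 0 + 1 + ⋯ + (N - 1)`, where `N` is the number of
rows. -/
theorem dvd_det_of_flat {ι : Type} [Fintype ι] [DecidableEq ι] (s : A) (d : ι → ℕ)
    (φ : ι → ℕ → A) (hφ : ∀ i, FlatTo s (d i) (φ i)) (n : ι → ℕ) (v : ℕ)
    (hv : v + ∑ i, d i ≤ ∑ i ∈ Finset.range (Fintype.card ι), i) :
    s ^ v ∣ (Matrix.of fun i j => φ i (n j)).det := by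
  obtain ⟨B, hB⟩ : ∃ B, ∀ j, n j < B :=
    ⟨∑ j, n j + 1, fun j => Nat.lt_succ_of_le (Finset.single_le_sum (f := n) (fun _ _ => Nat.zero_le _) (Finset.mem_univ j))⟩
  have hrow : (Matrix.of fun i j => φ i (n j)) = fun i => ∑ m : Fin B,
      ((fwdDiff 1)^[(m : ℕ)] (φ i) 0) • (fun j => (((n j).choose m : ℕ) : A)) := by
    funext i j
    have h1 := shift_eq_sum_fwdDiff_iter 1 (φ i) (n j) 0
    simp only [zero_add, smul_eq_mul, mul_one] at h1
    rw [Matrix.of_apply, h1, Finset.sum_apply,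
      Fin.sum_univ_eq_sum_range (fun m => (((fwdDiff 1)^[m] (φ i) 0) • (fun j => (((n j).choose m : ℕ) : A))) j) B]
    refine (Finset.sum_subset (Finset.range_mono (hB j)) fun m _ hm => ?_).trans
      (Finset.sum_congr rfl fun m _ => ?_)
    · rw [Nat.choose_eq_zero_of_lt (by simpa using hm), zero_smul]
    · simp [mul_comm]
  rw [hrow]
  change s ^ v ∣ Matrix.detRowAlternating.toMultilinearMap _
  rw [MultilinearMap.map_sum]
  refine Finset.dvd_sum fun r _ => ?_
  rw [MultilinearMap.map_smul_univ]
  by_cases hr : Function.Injective r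
  · refine Dvd.dvd.mul_right ?_ _
    have h1 : s ^ (∑ i, ((r i : ℕ) - d i)) ∣ ∏ i, (fwdDiff 1)^[(r i : ℕ)] (φ i) 0 := by
      rw [← Finset.prod_pow_eq_pow_sum]
      exact Finset.prod_dvd_prod_of_dvd _ _ fun i _ => hφ i _ _
    refine (pow_dvd_pow s ?_).trans h1
    have h2 := sum_range_le_of_inj (fun i => (r i : ℕ)) (Fin.val_injective.comp hr)
    have h3 : ∑ i, (r i : ℕ) ≤ ∑ i, ((r i : ℕ) - d i) + ∑ i, d i := by
      rw [← Finset.sum_add_distrib]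
      exact Finset.sum_le_sum fun i _ => by omega
    omega
  · have : Matrix.detRowAlternating.toMultilinearMap
        (fun i => fun j => (((n j).choose (r i) : ℕ) : A)) = 0 := by
      refine Matrix.detRowAlternating.map_eq_zero_of_not_injective _ fun hinj => hr fun a b hab => ?_
      exact hinj (by simp only [hab])
    rw [this, smul_zero]
    exact dvd_zero _

/-- The interpolation matrix. The row `(i, l)` is the function `n ^ i g ^ (l n)` and the column
`(r, t)` is the point `n = t + k r`, with `g ^ k` replaced by `b2 / b1` and denominators cleared
by `b1 ^ (E r)`. -/
def interpM (K L R S k E : ℕ) (b1 b2 g : A) : Matrix (Fin K × Fin L) (Fin R × Fin S) A :=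
  Matrix.of fun i j => (((j.2 : ℕ) + k * j.1 : ℕ) : A) ^ (i.1 : ℕ) * (g ^ (j.2 : ℕ)) ^ (i.2 : ℕ)
    * ((b2 ^ (j.1 : ℕ)) ^ (i.2 : ℕ) * (b1 ^ (j.1 : ℕ)) ^ (E - i.2))

/-- Modulo `s ^ v` one has `b2 = b1 g ^ k`, so that the column `(r, t)` of `interpM` is
`b1 ^ (E r)` times the column of values of the functions `n ^ i (g ^ l) ^ n` at `n = t + k r`, and
`dvd_det_of_flat` applies. -/
theorem dvd_interp_minor {K L R S k E z v : ℕ} {b1 b2 g s : A} (hLE : L ≤ E + 1)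
    (hg : s ∣ g - 1) (hb : s ^ z ∣ b1 * g ^ k - b2) (hvz : v ≤ z)
    (hv : v + ∑ i : Fin K × Fin L, (i.1 : ℕ) ≤ ∑ i ∈ Finset.range (K * L), i)
    (q : Fin K × Fin L → Fin R × Fin S) :
    s ^ v ∣ ((interpM K L R S k E b1 b2 g).submatrix id q).det := by
  let n : Fin K × Fin L → ℕ := fun j => (q j).2 + k * (q j).1
  have h1 : s ^ v ∣ (Matrix.of fun (i j : Fin K × Fin L) =>
      ((n j : A) ^ (i.1 : ℕ) * (g ^ (i.2 : ℕ)) ^ n j)).det := by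
    refine dvd_det_of_flat s (fun i => (i.1 : ℕ)) (fun i m => (m : A) ^ (i.1 : ℕ) * (g ^ (i.2 : ℕ)) ^ m)
      (fun i => flatTo_pow_geom (hg.trans (by simpa using sub_dvd_pow_sub_pow g 1 (i.2 : ℕ))) _) n v ?_
    simpa using hv
  let π := Ideal.Quotient.mk (Ideal.span {s ^ v})
  have hπ : ∀ x, π x = 0 ↔ s ^ v ∣ x := fun x => by
    rw [Ideal.Quotient.eq_zero_iff_mem, Ideal.mem_span_singleton]
  have hb2 : π b2 = π b1 * π g ^ k := by
    have := (hπ _).2 ((pow_dvd_pow s hvz).trans hb)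
    rw [map_sub, map_mul, map_pow] at this
    exact (sub_eq_zero.1 this).symm
  rw [← hπ] at h1 ⊢
  rw [RingHom.map_det] at h1 ⊢
  have h2 := Matrix.det_mul_row (fun j => (π b1) ^ (E * (q j).1 : ℕ)) (π.mapMatrix
    (Matrix.of fun (i j : Fin K × Fin L) => ((n j : A) ^ (i.1 : ℕ) * (g ^ (i.2 : ℕ)) ^ n j)))
  rw [h1, mul_zero] at h2
  rw [← h2]
  congr 1
  ext i j
  have hE : E = (E - i.2) + i.2 := by have := i.2.2; omega
  simp only [interpM, RingHom.mapMatrix_apply, Matrix.map_apply, Matrix.submatrix_apply,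
    Matrix.of_apply, id, map_mul, map_pow, map_natCast, hb2, n]
  generalize hx : E - (i.2 : ℕ) = x at *
  rw [hE]
  ring
end

/-! ### The interpolation determinant over `ℤ[ε]` -/

/-- The norm form does not vanish, because `F² + 4` is not a square. -/
theorem nm_ne_zero {F : ℤ} (hF : 3 ≤ F) (y : O F) (hy : y ≠ 0) :
    y.re ^ 2 + F * y.re * y.im - y.im ^ 2 ≠ 0 := by
  intro h
  have h1 : (2 * y.re + F * y.im) ^ 2 = (F ^ 2 + 4) * y.im ^ 2 := by linear_combination 4 * h
  by_cases hi : y.im = 0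
  · rw [hi] at h
    have : y.re = 0 := by
      have : y.re ^ 2 = 0 := by linear_combination h
      exact pow_eq_zero_iff (two_ne_zero) |>.1 this
    exact hy (by ext <;> simp [hi, this])
  · have h2 : y.im ∣ 2 * y.re + F * y.im :=
      (Int.pow_dvd_pow_iff two_ne_zero).1 ⟨F ^ 2 + 4, by rw [h1]; ring⟩
    obtain ⟨w, hw⟩ := h2
    rw [hw, mul_pow, mul_comm] at h1
    have h3 : w ^ 2 = F ^ 2 + 4 := mul_right_cancel₀ (pow_ne_zero 2 hi) h1
    rw [← sq_abs] at h3
    have h4 := abs_nonneg w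
    generalize |w| = u at h3 h4
    have h5 : F < u := by nlinarith
    nlinarith

theorem coef_bound {x y B : ℝ} {r l E : ℕ} (hx : |x| ≤ B) (hy : |y| ≤ B) (hl : l ≤ E) :
    |(y ^ r) ^ l * (x ^ r) ^ (E - l)| ≤ (B ^ E) ^ r := by
  obtain ⟨d, rfl⟩ := Nat.exists_eq_add_of_le hl
  rw [Nat.add_sub_cancel_left, abs_mul, abs_pow, abs_pow, abs_pow, abs_pow]
  have hB : 0 ≤ B := (abs_nonneg x).trans hx
  calc (|y| ^ r) ^ l * (|x| ^ r) ^ d ≤ (B ^ r) ^ l * (B ^ r) ^ d := by gcongr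
    _ = _ := by ring

set_option maxHeartbeats 1000000 in
/-- The determinant argument. A nonzero minor `D` of `interpM` with `K L` rows is divisible by
`√c ^ v`, so its norm is at least `c ^ v` in absolute value. On the other hand each conjugate of
`D` is at most `(K L)!` times a product of row and column bounds; the row bounds are powers of
`X`, the factorial is at most `X ^ (K L)` and `X² ≤ c ^ ρ`, and the column bounds are powers of
`c` and `F ≤ √c`. Together they bound the norm by `c` to the exponent on the left of `hexp`. -/
theorem interp_false {F : ℤ} (hF : 3 ≤ F) {K L R S k E z v ρ X : ℕ} {b1 b2 : O F}
    (hb : (b1 = al F ∧ b2 = star (al F)) ∨ (b1 = star (al F) ∧ b2 = al F))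
    (hdiv : rt F ^ z ∣ b1 * (-eta F) ^ k - b2) (hvz : v ≤ z) (hLE : L ≤ E + 1)
    (hv : v + ∑ i : Fin K × Fin L, (i.1 : ℕ) ≤ ∑ i ∈ Finset.range (K * L), i)
    (hexp : ρ * (K * L + ∑ i : Fin K × Fin L, (i.1 : ℕ))
      + E * (∑ j : Fin R × Fin S, ((j.2 : ℕ) + j.1)) < v)
    (hX1 : 1 ≤ X) (hX : S + k * R ≤ X) (hN : K * L ≤ X) (hXc : (X : ℤ) ^ 2 ≤ (F ^ 2 + 4) ^ ρ)
    (hSk : S ≤ k) (hLS : L ≤ S) (hcount : (K - 1) * L < R * (S - L + 1)) : False := by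
  obtain ⟨c, hc⟩ : ∃ c : ℝ, c = (F : ℝ) ^ 2 + 4 := ⟨_, rfl⟩
  have hF' : (3 : ℝ) ≤ F := by exact_mod_cast hF
  have hc1 : 1 ≤ c := by nlinarith
  have hFc : (F : ℝ) ^ 2 ≤ c := by linarith
  obtain ⟨r, hr0, hr⟩ : ∃ r : ℝ, 0 ≤ r ∧ r ^ 2 = c := ⟨√c, Real.sqrt_nonneg _, Real.sq_sqrt (by linarith)⟩
  have hrF : (F : ℝ) < r := by nlinarith
  have hrF2 : r < F + 2 := by nlinarith
  obtain ⟨e1, he1⟩ : ∃ e : ℝ, e = (F + r) / 2 := ⟨_, rfl⟩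
  obtain ⟨e2, he2⟩ : ∃ e : ℝ, e = (F - r) / 2 := ⟨_, rfl⟩
  have hq1 : e1 * e1 = 1 + F * e1 := by rw [he1]; linear_combination (hr + hc) / 4
  have hq2 : e2 * e2 = 1 + F * e2 := by rw [he2]; linear_combination (hr + hc) / 4
  have he1l : (3 : ℝ) < e1 := by linarith
  have he1u : e1 < F + 1 := by linarith
  have he2l : -1 < e2 := by linarith
  have he2u : e2 < 0 := by linarith
  set φ1 := emb F e1 hq1 with hφ1
  set φ2 := emb F e2 hq2 with hφ2
  have hG1 : φ1 (-eta F) = -(e1 ^ 2) := by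
    rw [map_neg, emb_apply]; simp only [eta]; push_cast; rw [sq, hq1]
  have hG2 : φ2 (-eta F) = -(e2 ^ 2) := by
    rw [map_neg, emb_apply]; simp only [eta]; push_cast; rw [sq, hq2]
  have hA1 : φ1 (al F) = e1 - 1 := by rw [emb_apply]; simp only [al]; push_cast; ring
  have hA2 : φ2 (al F) = e2 - 1 := by rw [emb_apply]; simp only [al]; push_cast; ring
  have hB1 : φ1 (star (al F)) = e2 - 1 := by
    rw [emb_apply]; simp [al]; rw [he1, he2]; ring
  have hB2 : φ2 (star (al F)) = e1 - 1 := by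
    rw [emb_apply]; simp [al]; rw [he1, he2]; ring
  have hbA : |e1 - 1| ≤ F := by rw [abs_le]; constructor <;> linarith
  have hbB : |e2 - 1| ≤ F := by rw [abs_le]; constructor <;> linarith
  have hb' : (|φ1 b1| ≤ F ∧ |φ1 b2| ≤ F ∧ |φ2 b1| ≤ F ∧ |φ2 b2| ≤ F) ∧ φ1 b1 ≠ 0 ∧ φ1 b2 ≠ 0 := by
    have n1 : e1 - 1 ≠ 0 := by intro h; linarith
    have n2 : e2 - 1 ≠ 0 := by intro h; linarith
    rcases hb with ⟨h1, h2⟩ | ⟨h1, h2⟩ <;> rw [h1, h2, hA1, hA2, hB1, hB2]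
    · exact ⟨⟨hbA, hbB, hbB, hbA⟩, n1, n2⟩
    · exact ⟨⟨hbB, hbA, hbA, hbB⟩, n2, n1⟩
  obtain ⟨⟨k11, k12, k21, k22⟩, hn1, hn2⟩ := hb'
  clear_value φ1 φ2
  set M := interpM K L R S k E b1 b2 (-eta F) with hM
  have hMap : ∀ (φ : O F →+* ℝ) i j, φ (M i j) =
      (((j.2 : ℕ) + k * j.1 : ℕ) : ℝ) ^ (i.1 : ℕ) * (φ (-eta F) ^ (j.2 : ℕ)) ^ (i.2 : ℕ)
      * ((φ b2 ^ (j.1 : ℕ)) ^ (i.2 : ℕ) * (φ b1 ^ (j.1 : ℕ)) ^ (E - i.2)) := by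
    intro φ i j
    simp only [hM, interpM, Matrix.of_apply, map_mul, map_pow, map_natCast]
  -- the rows are linearly independent, so some maximal minor is nonzero
  obtain ⟨q, hqinj, hqdet⟩ := exists_minor (M.map φ1) (by
    intro p hp
    refine zero_est K L R S k (φ1 (-eta F)) (φ1 b2 / φ1 b1) ?_ (div_ne_zero hn2 hn1) hSk hLS hcount p ?_
    · rw [hG1, abs_neg, abs_of_nonneg (sq_nonneg _)]; nlinarith
    · intro a ha t ht
      have h1 := congrFun hp (⟨a, ha⟩, ⟨t, ht⟩)
      simp only [Matrix.vecMul, dotProduct, Matrix.map_apply, hMap, Pi.zero_apply] at h1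
      have h2 : (φ1 b1 ^ a) ^ E ≠ 0 := pow_ne_zero _ (pow_ne_zero _ hn1)
      apply mul_left_cancel₀ h2
      rw [mul_zero, ← h1, Finset.mul_sum]
      refine Finset.sum_congr rfl fun i _ => ?_
      have hE : (φ1 b1 ^ a) ^ E = (φ1 b1 ^ a) ^ (E - i.2) * (φ1 b1 ^ a) ^ (i.2 : ℕ) := by
        rw [← pow_add]; congr 1; have := i.2.2; omega
      rw [hE, div_pow, mul_pow, div_pow]
      have h3 : (φ1 b1 ^ a) ^ (i.2 : ℕ) ≠ 0 := pow_ne_zero _ (pow_ne_zero _ hn1)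
      field_simp)
  set D := (M.submatrix id q).det with hD
  have hD1 : φ1 D = (((M.submatrix id q).map φ1)).det := by
    rw [hD, RingHom.map_det]; rfl
  have hD2 : φ2 D = (((M.submatrix id q).map φ2)).det := by
    rw [hD, RingHom.map_det]; rfl
  have hDne : φ1 D ≠ 0 := by rw [hD1]; exact hqdet
  have hrteps : rt F ∣ -eta F - 1 := ⟨⟨0, -1⟩, by
    ext <;> simp [rt, eta] <;> ring⟩
  have hdvd : rt F ^ v ∣ D := dvd_interp_minor hLE hrteps hdiv hvz hv q
  -- lower bound through the norm
  have hlow : c ^ v ≤ |φ1 D * φ2 D| := by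
    obtain ⟨y, hy⟩ := hdvd
    have hy0 : y ≠ 0 := by
      intro h; rw [hy, h, mul_zero, map_zero] at hDne; exact hDne rfl
    have hnm : φ1 y * φ2 y = ((y.re ^ 2 + F * y.re * y.im - y.im ^ 2 : ℤ) : ℝ) := by
      rw [hφ1, hφ2, emb_apply, emb_apply, he1, he2]; push_cast
      linear_combination (-(y.im : ℝ) ^ 2 / 4) * (hr + hc)
    have hrt : φ1 (rt F) * φ2 (rt F) = -c := by
      rw [hφ1, hφ2, emb_apply, emb_apply, he1, he2]; simp only [rt]; push_cast
      linear_combination -hr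
    have hge : (1 : ℝ) ≤ |φ1 y * φ2 y| := by
      rw [hnm, ← Int.cast_abs]
      exact_mod_cast Int.one_le_abs (nm_ne_zero hF y hy0)
    rw [hy, map_mul, map_mul, map_pow, map_pow,
      show φ1 (rt F) ^ v * φ1 y * (φ2 (rt F) ^ v * φ2 y) =
        (φ1 (rt F) * φ2 (rt F)) ^ v * (φ1 y * φ2 y) by ring, hrt, abs_mul, abs_pow, abs_neg,
      abs_of_nonneg (by linarith : 0 ≤ c)]
    exact le_mul_of_one_le_right (by positivity) hge
  -- upper bounds
  have hX' : (1 : ℝ) ≤ X := by exact_mod_cast hX1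
  have hnX : ∀ j : Fin R × Fin S, (((j.2 : ℕ) + k * j.1 : ℕ) : ℝ) ≤ X := by
    intro j
    have h1 := j.2.2
    have h2 : k * j.1 ≤ k * R := Nat.mul_le_mul_left _ j.1.2.le
    exact_mod_cast (by omega : (j.2 : ℕ) + k * j.1 ≤ X)
  have hcoef : ∀ (φ : O F →+* ℝ), |φ b1| ≤ F → |φ b2| ≤ F → ∀ (i : Fin K × Fin L) (j : Fin R × Fin S),
      |(φ b2 ^ (j.1 : ℕ)) ^ (i.2 : ℕ) * (φ b1 ^ (j.1 : ℕ)) ^ (E - i.2)| ≤ ((F : ℝ) ^ E) ^ (j.1 : ℕ) :=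
    fun φ h1 h2 i j => coef_bound h1 h2 (by have := i.2.2; omega)
  have hup1 : |φ1 D| ≤ (K * L).factorial * ((∏ i : Fin K × Fin L, (X : ℝ) ^ (i.1 : ℕ)) *
      ∏ j, ((c ^ E) ^ ((q j).2 : ℕ) * ((F : ℝ) ^ E) ^ ((q j).1 : ℕ))) := by
    rw [hD1]
    have := abs_det_le ((M.submatrix id q).map φ1) (fun i => (X : ℝ) ^ (i.1 : ℕ))
      (fun j => (c ^ E) ^ ((q j).2 : ℕ) * ((F : ℝ) ^ E) ^ ((q j).1 : ℕ)) ?_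
    · simpa using this
    · intro i j
      rw [Matrix.map_apply, Matrix.submatrix_apply, id, hMap, abs_mul, abs_mul, mul_assoc]
      refine mul_le_mul ?_ (mul_le_mul ?_ (hcoef φ1 k11 k12 _ _) (abs_nonneg _) (by positivity))
        (by positivity) (by positivity)
      · rw [abs_pow, Nat.abs_cast]
        exact pow_le_pow_left₀ (by positivity) (hnX _) _
      · rw [hG1, abs_pow, abs_pow, abs_neg, abs_of_nonneg (sq_nonneg e1), ← pow_mul, mul_comm,
          pow_mul]
        have h1 : (i.2 : ℕ) ≤ E := by have := i.2.2; omega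
        have h2 : e1 ^ 2 ≤ c := by nlinarith
        have h3 : (e1 ^ 2) ^ (i.2 : ℕ) ≤ c ^ E :=
          (pow_le_pow_left₀ (sq_nonneg _) h2 _).trans (pow_le_pow_right₀ hc1 h1)
        exact pow_le_pow_left₀ (by positivity) h3 _
  have hup2 : |φ2 D| ≤ (K * L).factorial * ((∏ i : Fin K × Fin L, (X : ℝ) ^ (i.1 : ℕ)) *
      ∏ j, (((F : ℝ) ^ E) ^ ((q j).1 : ℕ))) := by
    rw [hD2]
    have := abs_det_le ((M.submatrix id q).map φ2) (fun i => (X : ℝ) ^ (i.1 : ℕ))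
      (fun j => ((F : ℝ) ^ E) ^ ((q j).1 : ℕ)) ?_
    · simpa using this
    · intro i j
      rw [Matrix.map_apply, Matrix.submatrix_apply, id, hMap, abs_mul, abs_mul]
      refine mul_le_mul ?_ (hcoef φ2 k21 k22 _ _) (abs_nonneg _) (by positivity)
      rw [abs_pow, Nat.abs_cast]
      have h1 : (((q j).2 + k * (q j).1 : ℕ) : ℝ) ^ (i.1 : ℕ) ≤ (X : ℝ) ^ (i.1 : ℕ) :=
        pow_le_pow_left₀ (by positivity) (hnX _) _
      have h2 : |(φ2 (-eta F) ^ ((q j).2 : ℕ)) ^ (i.2 : ℕ)| ≤ 1 := by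
        rw [hG2, abs_pow, abs_pow, abs_neg, abs_of_nonneg (sq_nonneg e2)]
        exact pow_le_one₀ (by positivity) (pow_le_one₀ (by positivity) (by nlinarith))
      calc _ ≤ (X : ℝ) ^ (i.1 : ℕ) * 1 := mul_le_mul h1 h2 (abs_nonneg _) (by positivity)
        _ = _ := mul_one _
  have hsumq : ∑ j, (((q j).2 : ℕ) + (q j).1) ≤ ∑ j : Fin R × Fin S, ((j.2 : ℕ) + j.1) := by
    rw [← Finset.sum_image (f := fun j : Fin R × Fin S => (j.2 : ℕ) + j.1) (s := Finset.univ) (g := q)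
      (fun _ _ _ _ e => hqinj e)]
    exact Finset.sum_le_sum_of_subset (Finset.subset_univ _)
  set T := ∑ j : Fin R × Fin S, ((j.2 : ℕ) + j.1)
  set I := ∑ i : Fin K × Fin L, (i.1 : ℕ)
  have hprod : (∏ j, ((c ^ E) ^ ((q j).2 : ℕ) * ((F : ℝ) ^ E) ^ ((q j).1 : ℕ))) *
      (∏ j, (((F : ℝ) ^ E) ^ ((q j).1 : ℕ))) ≤ c ^ (E * T) := by
    rw [← Finset.prod_mul_distrib]
    calc _ ≤ ∏ j, (c ^ E) ^ (((q j).2 : ℕ) + (q j).1) := by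
          refine Finset.prod_le_prod (fun _ _ => by positivity) fun j _ => ?_
          rw [pow_add, mul_assoc, ← mul_pow, ← mul_pow, ← sq]
          gcongr
      _ = (c ^ E) ^ (∑ j, (((q j).2 : ℕ) + (q j).1)) := Finset.prod_pow_eq_pow_sum _ _ _
      _ ≤ (c ^ E) ^ T := pow_le_pow_right₀ (one_le_pow₀ hc1) hsumq
      _ = _ := by rw [pow_mul]
  have hrow : ((K * L).factorial : ℝ) * (∏ i : Fin K × Fin L, (X : ℝ) ^ (i.1 : ℕ)) ≤ X ^ (K * L + I) := by
    rw [Finset.prod_pow_eq_pow_sum, pow_add]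
    gcongr
    calc ((K * L).factorial : ℝ) ≤ ((K * L : ℕ) : ℝ) ^ (K * L) := by exact_mod_cast Nat.factorial_le_pow _
      _ ≤ _ := by gcongr
  have hXc' : (X : ℝ) ^ 2 ≤ c ^ ρ := by rw [hc]; exact_mod_cast hXc
  have hfin : |φ1 D * φ2 D| ≤ c ^ (ρ * (K * L + I) + E * T) := by
    rw [abs_mul]
    calc _ ≤ _ := mul_le_mul hup1 hup2 (abs_nonneg _) (by positivity)
      _ = (((K * L).factorial : ℝ) * (∏ i : Fin K × Fin L, (X : ℝ) ^ (i.1 : ℕ))) ^ 2 *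
        ((∏ j, ((c ^ E) ^ ((q j).2 : ℕ) * ((F : ℝ) ^ E) ^ ((q j).1 : ℕ))) *
      (∏ j, (((F : ℝ) ^ E) ^ ((q j).1 : ℕ)))) := by ring
      _ ≤ ((X : ℝ) ^ (K * L + I)) ^ 2 * c ^ (E * T) := by gcongr
      _ = ((X : ℝ) ^ 2) ^ (K * L + I) * c ^ (E * T) := by rw [← pow_mul, ← pow_mul, mul_comm 2]
      _ ≤ (c ^ ρ) ^ (K * L + I) * c ^ (E * T) := by gcongr
      _ = _ := by rw [← pow_mul, ← pow_add]
  have hc2 : 1 < c := by nlinarith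
  exact absurd (hlow.trans hfin) (not_le.2 (pow_lt_pow_right₀ hc2 hexp))

/-! ### Choice of the parameters -/

theorem param_small (f p : ℕ) (hf : 191 ≤ f) : 12 * (4 * p + 11) ≤ f ^ (p + 1) := by
  refine le_trans ?_ (Nat.pow_le_pow_left hf _)
  induction p with
  | zero => norm_num
  | succ p ih => rw [pow_succ 191 (p + 1)]; omega

theorem param_big (f p : ℕ) (hf : 191 ≤ f) :
    1800 * (2 * (p + 1) + 5) * (4 * (p + 1) + 11) ^ 3 ≤ f ^ (p + 4) := by
  refine le_trans ?_ (Nat.pow_le_pow_left hf _)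
  induction p with
  | zero => norm_num
  | succ p ih =>
    rw [show 191 ^ (p + 1 + 4) = 191 ^ (p + 4) * 191 by ring]
    refine le_trans ?_ (Nat.mul_le_mul_right 191 ih)
    ring_nf
    nlinarith [Nat.zero_le p, sq_nonneg p, pow_nonneg (Nat.zero_le p) 3, pow_nonneg (Nat.zero_le p) 4]

/-- Let `p + 3` be the integer part of the logarithm of `k = 2m` to the base `f`. The parameters
are `ρ = 2p + 5`, `L = 2ρ + 1`, `K = 30 L`, `R = S = 6 L`, `E = L - 1`, `v = 900 ρ L³` and
`X = f ^ ρ`. The condition `v ≤ z` follows from `1800 ρ L³ ≤ f ^ (p + 3) ≤ k ≤ 2z`. -/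
theorem no_rep {f w m : ℕ} (hf : 191 ≤ f)
    (hlow : (f : ℤ) ^ 4 - (f : ℤ) ^ 3 ≤ 24 * (2 * m : ℕ)) (hup : m ≤ 2 * w + 1)
    (h : rt (f : ℤ) ^ (2 * w + 1) =
        al (f : ℤ) * eta (f : ℤ) ^ m - star (al (f : ℤ)) * star (eta (f : ℤ)) ^ m ∨
      rt (f : ℤ) ^ (2 * w + 1) =
        al (f : ℤ) * star (eta (f : ℤ)) ^ m - star (al (f : ℤ)) * eta (f : ℤ) ^ m) : False := by
  obtain ⟨z, hz⟩ : ∃ z, z = 2 * w + 1 := ⟨_, rfl⟩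
  obtain ⟨k, hk⟩ : ∃ k, k = 2 * m := ⟨_, rfl⟩
  rw [← hk] at hlow
  have hkz : k ≤ 2 * z := by omega
  rw [← hz] at h
  -- the congruence modulo `√c ^ z`
  have hdiv : ∃ b1 b2 : O (f : ℤ), ((b1 = al f ∧ b2 = star (al f)) ∨
      (b1 = star (al f) ∧ b2 = al f)) ∧ rt (f : ℤ) ^ z ∣ b1 * (-eta f) ^ k - b2 := by
    have h1 : (eta (f : ℤ)) ^ m * star (eta (f : ℤ)) ^ m = 1 := by
      rw [← mul_pow, eta_mul_star, one_pow]
    have h2 : (-eta (f : ℤ)) ^ k = eta (f : ℤ) ^ m * eta (f : ℤ) ^ m := by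
      rw [hk, (even_two_mul m).neg_pow, two_mul, pow_add]
    rcases h with h | h
    · refine ⟨_, _, Or.inl ⟨rfl, rfl⟩, ⟨eta (f : ℤ) ^ m, ?_⟩⟩
      rw [h, h2]
      linear_combination star (al (f : ℤ)) * h1
    · refine ⟨_, _, Or.inr ⟨rfl, rfl⟩, ⟨-eta (f : ℤ) ^ m, ?_⟩⟩
      rw [h, h2]
      linear_combination al (f : ℤ) * h1
  obtain ⟨b1, b2, hb, hdiv⟩ := hdiv
  have hlow' : f ^ 3 * 190 ≤ 24 * k := by
    have h1 : (f : ℤ) ^ 3 * 190 ≤ 24 * k := by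
      have h3 : (191 : ℤ) ≤ f := by exact_mod_cast hf
      nlinarith [pow_pos (by linarith : (0 : ℤ) < f) 3]
    exact_mod_cast h1
  have hk3 : f ^ 3 ≤ k := by omega
  have hk0 : k ≠ 0 := by
    have : 0 < f ^ 3 := by positivity
    omega
  have hlog3 : 3 ≤ Nat.log f k := (Nat.le_log_iff_pow_le (by omega) hk0).2 hk3
  obtain ⟨p, hp⟩ := Nat.exists_eq_add_of_le' hlog3
  have hkl : f ^ (p + 3) ≤ k := hp ▸ Nat.pow_log_le_self f hk0
  have hku : k < f ^ (p + 4) := by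
    have := Nat.lt_pow_succ_log_self (by omega : 1 < f) k
    rwa [hp] at this
  have hs1 := param_small f p hf
  obtain ⟨ρ, hρ⟩ : ∃ ρ, ρ = 2 * p + 5 := ⟨_, rfl⟩
  obtain ⟨L, hL⟩ : ∃ L, L = 2 * ρ + 1 := ⟨_, rfl⟩
  have hLp : 12 * L ≤ f ^ (p + 1) := by rw [hL, hρ]; omega
  have hf1 : f ^ (p + 1) ≤ f ^ (p + 3) := Nat.pow_le_pow_right (by omega) (by omega)
  have hρ5 : 5 ≤ ρ := by omega
  have hL11 : 11 ≤ L := by omega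
  have hv2 : 1800 * ρ * L ^ 3 ≤ k := by
    rcases p with _ | p
    · have h1 : 191 ^ 3 ≤ f ^ 3 := Nat.pow_le_pow_left hf 3
      subst hρ; subst hL
      norm_num at h1 ⊢
      omega
    · refine (le_trans ?_ (param_big f p hf)).trans hkl
      rw [hL, hρ]
      exact le_of_eq (by ring)
  have hsK : (∑ i : Fin (30 * L) × Fin L, (i.1 : ℕ)) * 2 = L * (30 * L * (30 * L - 1)) := by
    rw [Fintype.sum_prod_type]
    simp only [Finset.sum_const, Finset.card_univ, Fintype.card_fin, smul_eq_mul]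
    rw [← Finset.mul_sum, mul_assoc, Fin.sum_univ_eq_sum_range (fun i => i),
      Finset.sum_range_id_mul_two]
  have hsN := Finset.sum_range_id_mul_two (30 * L * L)
  have hsT : (∑ j : Fin (6 * L) × Fin (6 * L), ((j.2 : ℕ) + j.1))
      = 6 * L * (6 * L * (6 * L - 1)) := by
    rw [Fintype.sum_prod_type]
    simp only [Finset.sum_add_distrib, Finset.sum_const, Finset.card_univ, Fintype.card_fin,
      smul_eq_mul, ← Finset.mul_sum]
    rw [← mul_add, ← two_mul, Fin.sum_univ_eq_sum_range (fun i => i), mul_comm 2,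
      Finset.sum_range_id_mul_two]
  obtain ⟨l, rfl⟩ : ∃ l, L = l + 1 := ⟨L - 1, by omega⟩
  have hl : l = 2 * ρ := by omega
  subst hl
  have e1 : 30 * (2 * ρ + 1) - 1 = 60 * ρ + 29 := by omega
  have e2 : 6 * (2 * ρ + 1) - 1 = 12 * ρ + 5 := by omega
  have e3 : 30 * (2 * ρ + 1) * (2 * ρ + 1) - 1 = 120 * ρ ^ 2 + 120 * ρ + 29 := by
    have : 30 * (2 * ρ + 1) * (2 * ρ + 1) = 120 * ρ ^ 2 + 120 * ρ + 29 + 1 := by ring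
    rw [this, Nat.add_sub_cancel]
  rw [e1] at hsK
  rw [e2] at hsT
  rw [e3] at hsN
  refine interp_false (F := (f : ℤ)) (by omega) (K := 30 * (2 * ρ + 1)) (L := 2 * ρ + 1)
    (R := 6 * (2 * ρ + 1)) (S := 6 * (2 * ρ + 1)) (E := 2 * ρ)
    (v := 900 * ρ * (2 * ρ + 1) ^ 3) (ρ := ρ) (X := f ^ ρ) hb hdiv ?_ le_rfl ?_ ?_ ?_ ?_ ?_ ?_ ?_ ?_ ?_
  · have : 1800 * ρ * (2 * ρ + 1) ^ 3 = 2 * (900 * ρ * (2 * ρ + 1) ^ 3) := by ring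
    omega
  · nlinarith
  · rw [hsT]
    nlinarith
  · exact Nat.one_le_pow _ _ (by omega)
  · have h1 : f ^ ρ = f ^ (p + 1) * f ^ (p + 4) := by rw [hρ]; ring
    rw [h1]
    calc _ ≤ k * (6 * (2 * ρ + 1)) + k * (6 * (2 * ρ + 1)) := by
          refine Nat.add_le_add_right ?_ _
          exact (by omega : 6 * (2 * ρ + 1) ≤ k).trans (Nat.le_mul_of_pos_right _ (by omega))
      _ = (12 * (2 * ρ + 1)) * k := by ring
      _ ≤ _ := Nat.mul_le_mul hLp hku.le
  · have h1 : f ^ ρ = f ^ (p + 1) * f ^ (p + 1) * f ^ 3 := by rw [hρ]; ring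
    rw [h1]
    calc _ ≤ (12 * (2 * ρ + 1)) * (12 * (2 * ρ + 1)) * 1 := by
          rw [mul_one, mul_assoc, mul_mul_mul_comm 12, ← mul_assoc (12 * 12), mul_assoc (12 * 12)]
          exact Nat.mul_le_mul_right _ (by norm_num)
      _ ≤ _ := Nat.mul_le_mul (Nat.mul_le_mul hLp hLp) (Nat.one_le_pow _ _ (by omega))
  · push_cast
    rw [← pow_mul, mul_comm, pow_mul]
    exact pow_le_pow_left₀ (by positivity) (by linarith) _
  · omega
  · omega
  · rw [e1, show 6 * (2 * ρ + 1) - (2 * ρ + 1) + 1 = 10 * ρ + 6 by omega]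
    nlinarith

end Jes

theorem stmt_9 (f : ℕ) (hodd : Odd f) (hf : 2 < f)
    (x y z : ℕ) (hx : 0 < x) (hy : 0 < y) (hz : 0 < z) :
    (f ^ 2 - 4) ^ x + (4 * f) ^ y = (f ^ 2 + 4) ^ z ↔ (x, y, z) = (2, 2, 2) := by
  obtain ⟨a, ha'⟩ : ∃ a, a = f ^ 2 - 4 := ⟨_, rfl⟩
  obtain ⟨c, hc⟩ : ∃ c, c = f ^ 2 + 4 := ⟨_, rfl⟩
  have ha : a + 4 = f ^ 2 := by
    have : 4 ≤ f ^ 2 := by nlinarith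
    omega
  rw [← ha', ← hc]
  constructor
  swap
  · intro h
    simp only [Prod.mk.injEq] at h
    obtain ⟨rfl, rfl, rfl⟩ := h
    rw [hc, ← ha, mul_pow, ← ha]
    ring
  intro h
  have hxe := Jes.x_even hodd ha hc hz h
  obtain ⟨hp1, hp2⟩ := Jes.z_parity hodd ha hc hxe h
  obtain ⟨X, rfl⟩ := hxe.two_dvd
  have hX : 0 < X := by omega
  obtain hy1 | hy2 : y = 1 ∨ 2 ≤ y := by omega
  · exfalso
    subst hy1
    have hzo := hp1 rfl
    rw [pow_one] at h
    have hmod := Jes.one_f_mod4 hodd ha hc hX hzo h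
    have hlarge := Jes.one_f_large hodd ha hc hX hzo h hf
    have hz5 := Jes.one_z_ge hodd ha hc hX hzo h hf
    obtain ⟨w, rfl⟩ := hzo
    have hF : (3 : ℤ) ≤ (f : ℤ) := by exact_mod_cast hf
    have hFo : Odd (f : ℤ) := by exact_mod_cast hodd
    have hsq : ∀ v : ℤ, v ^ 2 ≠ (f : ℤ) := by
      -- squares are `0` or `1` modulo `4`, whereas `f ≡ 3`
      intro v hv
      have h4 : (f : ℤ) % 4 = 3 := by exact_mod_cast hmod
      rcases Int.even_or_odd' v with ⟨k, rfl | rfl⟩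
      · ring_nf at hv; omega
      · ring_nf at hv; omega
    have hAo : Odd ((a : ℤ) ^ X) := by
      have h8 := Jes.a_mod8 hodd ha
      have : Odd a := Nat.odd_iff.mpr (by omega)
      exact_mod_cast this.pow
    have hZ : ((a : ℤ) ^ X) ^ 2 + 4 * (f : ℤ) = ((f : ℤ) ^ 2 + 4) * ((c : ℤ) ^ w) ^ 2 := by
      have h' : (a : ℤ) ^ (2 * X) + 4 * f = (c : ℤ) ^ (2 * w + 1) := by exact_mod_cast h
      have hc' : (c : ℤ) = (f : ℤ) ^ 2 + 4 := by exact_mod_cast hc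
      rw [← hc', ← pow_mul, mul_comm X 2, h']
      ring
    obtain ⟨m, hm⟩ := Jes.ring_eq hF hFo hsq hAo
      (show (c : ℤ) ^ w = ((f : ℤ) ^ 2 + 4) ^ w by rw [hc]; push_cast; rfl) hZ
    exact Jes.no_rep hlarge (Jes.m_lower hF hFo (by omega) hm) (Jes.m_upper hF hm) hm
  · obtain ⟨Z, rfl⟩ := (hp2 hy2).two_dvd
    have hZ : 0 < Z := by omega
    obtain ⟨u, v, huv, h1, h2⟩ := Jes.split hodd ha hc hy h
    obtain hy2 | hy3 : y = 2 ∨ 3 ≤ y := by omega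
    · obtain ⟨rfl, rfl⟩ := Jes.case_two hf ha hc hZ hy2 huv h1 h2 h
      simp [hy2]
    · exact (Jes.case_three hodd hf ha hc hX hZ hy3 huv h1 h2).elim
end

section
/- (Miyazaki) Let f, g be positive integers with f > g, gcd(f,g) = 1, fg even, and f^2 − 2fg − g^2 = 1 or f^2 − 2fg − g^2 = −1. Then the only solution in positive integers (x,y,z) of the equation (f^2 − g^2)^x + (2fg)^y = (f^2 + g^2)^z is (x,y,z) = (2,2,2). -/
/-!
Write `a = f² - g²`, `b = 2fg`, `c = f² + g²`; the hypothesis says `a - b = ε` with `ε = ±1`, so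
`c² = a² + b²` is `1` modulo both `a` and `b`. Reducing `a ^ x + b ^ y = c ^ z` modulo `a` and
`b` shows that `z = 2Z` is even, and that `y = 2Y` is even if `ε = 1`, while `x = 2X` is even if
`ε = -1`. The equation then factors as a difference of two squares, and residues of `a`, `b`, `c`
modulo `f + g`, `f - g` (resp. modulo `2f`, `g`) determine the two factors.

* `ε = 1` (`pos_reduce`): `c ^ Z + b ^ Y = (f + g) ^ x`, `c ^ Z - b ^ Y = (f - g) ^ x` with `Y` odd.
  The 2-adic valuation of `(f + g) ^ x - (f - g) ^ x = 2 (2fg) ^ Y` forces `x = 2X` with `X` odd,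
  and then `Y = 1`, which gives `X = Z = 1` (`pos_final`).
* `ε = -1` (`neg_reduce`): `c ^ Z + a ^ X = (2f) ^ y / 2`, `c ^ Z - a ^ X = 2 g ^ y` with `X`, `Z`
  odd. For `y = 2` this gives `X = Z = 1`. Let `y ≥ 3`. If `y` is odd, reduction modulo `f` gives
  `g ≡ 1`, hence `g = 1`, `f = 2`, which fails modulo `8` (`neg_odd`). If `y = 2Y`, reduction
  modulo `(2f)²` gives `X ≠ Z` and `f ∣ X - Z`, whence `y > f` by size (`neg_exponent_large`). On
  the other hand `a ^ X = (m + g ^ Y) (m - g ^ Y)` with `2m = (2f) ^ Y` and coprime factors, so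
  these are `p ^ X` and `q ^ X` with `p q = a` and `p ^ X + q ^ X = (2f) ^ Y`. As `X` is odd,
  `2 ^ y` divides `p + q ≤ a + 1 = b ≤ f²`, contradicting `y > f` (`neg_even`).
-/

/-! ### Auxiliary congruences and divisibilities -/

/-- For odd `n`, `u`, `v` the numbers `u ^ n - v ^ n` and `u - v` have the same 2-adic valuation;
this is the half of that fact that is not trivial. -/
lemma two_adic {u v : ℤ} {n : ℕ} (hu : Odd u) (hv : Odd v) (hn : Odd n) {m : ℕ}
    (h : (2 : ℤ) ^ m ∣ u ^ n - v ^ n) : (2 : ℤ) ^ m ∣ u - v := by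
  have e := Int.prime_two
  have huv : (2 : ℤ) ∣ u - v := (hu.sub_odd hv).two_dvd
  have hu2 : ¬ (2 : ℤ) ∣ u := by
    rw [← even_iff_two_dvd]; exact Int.not_even_iff_odd.2 hu
  have hn2 : ¬ (2 : ℤ) ∣ (n : ℤ) := by
    obtain ⟨k, rfl⟩ := hn
    push_cast
    omega
  have := emultiplicity_pow_sub_pow_of_prime e huv hu2 hn2
  rw [pow_dvd_iff_le_emultiplicity] at h ⊢
  rwa [this] at h

lemma not_two_mul_dvd {u v : ℤ} {n : ℕ} (hu : Odd u) (hv : Odd v) (hn : Odd n)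
    (huv : u ≠ v) : ¬ 2 * (u - v) ∣ u ^ n - v ^ n := by
  intro h
  have h0 : u - v ≠ 0 := sub_ne_zero.2 huv
  have hfin : FiniteMultiplicity (2 : ℤ) (u - v) :=
    FiniteMultiplicity.of_prime_left Int.prime_two h0
  refine hfin.not_pow_dvd_of_multiplicity_lt (Nat.lt_succ_self _) ?_
  apply two_adic hu hv hn
  refine dvd_trans ?_ h
  rw [pow_succ, mul_comm]
  exact mul_dvd_mul_left _ (pow_multiplicity_dvd _ _)

lemma isCoprime_of_modEq_two {D k : ℤ} (hk : Odd k) (h : D ≡ 2 [ZMOD k]) : IsCoprime D k := by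
  obtain ⟨t, ht⟩ := h.symm.dvd
  obtain ⟨m, hm⟩ := hk
  refine ⟨-m, 1 + m * t, ?_⟩
  have : D = 2 + k * t := by linarith
  rw [this]
  linear_combination hm

lemma isCoprime_of_modEq_neg_two {D k : ℤ} (hk : Odd k) (h : D ≡ -2 [ZMOD k]) :
    IsCoprime D k := by
  have := isCoprime_of_modEq_two hk (D := -D) (by simpa using h.neg)
  simpa using this.neg_left

lemma one_add_pow_modEq (r : ℤ) (n : ℕ) (t : ℤ) :
    (1 + r * t) ^ n ≡ 1 + r * (n * t) [ZMOD r ^ 2] := by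
  induction n with
  | zero => simp
  | succ n ih =>
    rw [pow_succ (1 + r * t)]
    refine (ih.mul_right (1 + r * t)).trans ?_
    apply Int.ModEq.symm
    rw [Int.modEq_iff_dvd]
    exact ⟨n * t ^ 2, by push_cast; ring⟩

lemma eq_and_eq_of_dvd_of_mul_eq {D E P Q : ℤ} (hP : 0 < P) (hQ : 0 < Q) (hDP : D ∣ P)
    (hEQ : E ∣ Q) (hE : 0 < E) (h : D * E = P * Q) : D = P ∧ E = Q := by
  have l1 := Int.le_of_dvd hP hDP
  have l2 := Int.le_of_dvd hQ hEQ
  have hD : D = P := by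
    apply le_antisymm l1
    by_contra! hlt
    nlinarith
  rw [hD] at h
  exact ⟨hD, mul_left_cancel₀ hP.ne' h⟩

/-! ### The case `a = b + 1` -/

/-- Determination of the two factors of `(f ^ 2 - g ^ 2) ^ x = c ^ z - b ^ y` as a difference of
two squares. -/
lemma pos_reduce (f g : ℤ) (hg : 0 < g) (hfg : g < f) (hE : f ^ 2 - 2 * f * g - g ^ 2 = 1)
    (hf : Odd f) (hge : Even g) (x y z : ℕ) (hx : 0 < x) (hy : 0 < y)
    (h : (f ^ 2 - g ^ 2) ^ x + (2 * f * g) ^ y = (f ^ 2 + g ^ 2) ^ z) :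
    ∃ Y Z, y = 2 * Y ∧ z = 2 * Z ∧ (f + g) ^ x - (f - g) ^ x = 2 * (2 * f * g) ^ Y ∧
      (f + g) ^ x + (f - g) ^ x = 2 * (f ^ 2 + g ^ 2) ^ Z := by
  obtain ⟨a, ha⟩ : ∃ a, a = f ^ 2 - g ^ 2 := ⟨_, rfl⟩
  obtain ⟨b, hb⟩ : ∃ b, b = 2 * f * g := ⟨_, rfl⟩
  obtain ⟨c, hc⟩ : ∃ c, c = f ^ 2 + g ^ 2 := ⟨_, rfl⟩
  obtain ⟨k, hk⟩ : ∃ k, k = f + g := ⟨_, rfl⟩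
  obtain ⟨l, hl⟩ : ∃ l, l = f - g := ⟨_, rfl⟩
  rw [← ha, ← hb, ← hc] at h
  have hkl : a = k * l := by rw [ha, hk, hl]; ring
  have hab : a = b + 1 := by rw [ha, hb]; linarith
  have hl0 : 0 < l := by omega
  have hlk : l < k := by omega
  have hko : Odd k := by rw [hk]; exact hf.add_even hge
  have hlo : Odd l := by rw [hl]; exact hf.sub_even hge
  have hb4 : 4 ≤ b := by rw [hb]; nlinarith
  have hc2 : c ^ 2 = a ^ 2 + b ^ 2 := by rw [ha, hb, hc]; ring
  have hcb : c ^ 2 ≡ 1 [ZMOD b] := by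
    apply Int.ModEq.symm
    rw [Int.modEq_iff_dvd]
    exact ⟨2 * b + 2, by rw [hc2, hab]; ring⟩
  have hca : c ^ 2 ≡ 1 [ZMOD a] := by
    apply Int.ModEq.symm
    rw [Int.modEq_iff_dvd]
    exact ⟨2 * a - 2, by rw [hc2, hab]; ring⟩
  have hab1 : a ≡ 1 [ZMOD b] := by
    rw [hab]; simp [Int.ModEq]
  have hba1 : b ≡ -1 [ZMOD a] := by
    apply Int.ModEq.symm
    rw [Int.modEq_iff_dvd]
    exact ⟨1, by rw [hab]; ring⟩
  -- the exponent of `c` is even, by reduction modulo `b`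
  obtain ⟨Z, rfl⟩ : ∃ Z, z = 2 * Z := by
    rcases Nat.even_or_odd' z with ⟨Z, h' | h'⟩
    · exact ⟨Z, h'⟩
    exfalso
    have e1 : c ^ z ≡ c [ZMOD b] := by
      rw [h', pow_succ, pow_mul]
      simpa using (hcb.pow Z).mul_right c
    have e2 : c ^ z ≡ 1 [ZMOD b] := by
      rw [← h]
      have := (hab1.pow x).add ((Int.modEq_zero_iff_dvd.2 (dvd_pow_self b hy.ne')))
      simpa using this
    have e3 := (e2.symm.trans e1).dvd
    have e4 : c - 1 = b + 2 * g ^ 2 := by rw [hc, hb]; linarith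
    rw [e4] at e3
    have e5 : b ∣ 2 * g ^ 2 := (dvd_add_right dvd_rfl).1 e3
    have := Int.le_of_dvd (by positivity) e5
    rw [hb] at this
    nlinarith
  have hcZ : c ^ (2 * Z) ≡ 1 [ZMOD a] := by
    rw [pow_mul]; simpa using hca.pow Z
  obtain ⟨Y, rfl⟩ : ∃ Y, y = 2 * Y := by
    rcases Nat.even_or_odd' y with ⟨Y, h' | h'⟩
    · exact ⟨Y, h'⟩
    exfalso
    have e1 : b ^ y ≡ -1 [ZMOD a] := by
      have := hba1.pow y
      rwa [Odd.neg_one_pow ⟨Y, h'⟩] at this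
    have e2 : c ^ (2 * Z) ≡ -1 [ZMOD a] := by
      rw [← h]
      have := ((Int.modEq_zero_iff_dvd.2 (dvd_pow_self a hx.ne'))).add e1
      simpa using this
    have e3 := (e2.symm.trans hcZ).dvd
    have := Int.le_of_dvd (by norm_num) e3
    linarith
  have hY : 0 < Y := by omega
  obtain ⟨D, hD⟩ : ∃ D, D = c ^ Z + b ^ Y := ⟨_, rfl⟩
  obtain ⟨E, hE'⟩ : ∃ E, E = c ^ Z - b ^ Y := ⟨_, rfl⟩
  have hbY : 0 < b ^ Y := by positivity
  have hDE : D * E = k ^ x * l ^ x := by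
    rw [← mul_pow, ← hkl, hD, hE']
    have : a ^ x = (c ^ Z) ^ 2 - (b ^ Y) ^ 2 := by
      rw [← pow_mul, ← pow_mul, mul_comm Z, mul_comm Y]; linarith
    rw [this]; ring
  have hk0 : 0 < k := by linarith
  have hc0 : 0 < c := by rw [hc]; positivity
  have hD0 : 0 < D := by rw [hD]; positivity
  have hE0 : 0 < E := by
    have : 0 < D * E := by rw [hDE]; positivity
    exact (pos_iff_pos_of_mul_pos this).1 hD0
  have hED : E < D := by linarith
  have hck : c ≡ 1 [ZMOD k] := by
    apply Int.ModEq.symm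
    rw [Int.modEq_iff_dvd]
    exact ⟨2 * g, by rw [hc, hk]; linear_combination hE⟩
  have hbk : b ≡ -1 [ZMOD k] := by
    apply Int.ModEq.symm
    rw [Int.modEq_iff_dvd]
    exact ⟨l, by rw [mul_comm] at hkl; linarith⟩
  have hcl : c ≡ -1 [ZMOD l] := by
    apply Int.ModEq.symm
    rw [Int.modEq_iff_dvd]
    exact ⟨2 * f, by rw [hc, hl]; linear_combination -hE⟩
  have hbl : b ≡ -1 [ZMOD l] := by
    apply Int.ModEq.symm
    rw [Int.modEq_iff_dvd]
    exact ⟨k, by linarith⟩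
  have hckZ : c ^ Z ≡ 1 [ZMOD k] := by simpa using hck.pow Z
  have hYo : Odd Y := by
    rw [← Nat.not_even_iff_odd]
    intro hYe
    have e1 : D ≡ 2 [ZMOD k] := by
      rw [hD]
      have := hckZ.add (hbk.pow Y)
      rw [hYe.neg_one_pow] at this
      exact this
    have e2 : D ∣ l ^ x := ((isCoprime_of_modEq_two hko e1).pow_right (n := x)).dvd_of_dvd_mul_left
      (hDE ▸ Dvd.intro _ rfl)
    have e3 := Int.le_of_dvd (by positivity) e2
    have e4 : l ^ x ≤ k ^ x := pow_le_pow_left₀ hl0.le hlk.le x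
    have e5 : 0 < l ^ x := by positivity
    nlinarith
  have hElx : E ∣ l ^ x := by
    have e1 : E ≡ 2 [ZMOD k] := by
      rw [hE']
      have := hckZ.sub (hbk.pow Y)
      rw [hYo.neg_one_pow] at this
      exact this
    exact ((isCoprime_of_modEq_two hko e1).pow_right (n := x)).dvd_of_dvd_mul_left
      (hDE ▸ Dvd.intro_left _ rfl)
  have hZo : Odd Z := by
    rw [← Nat.not_even_iff_odd]
    intro hZe
    have e1 : E ≡ 2 [ZMOD l] := by
      rw [hE']
      have := (hcl.pow Z).sub (hbl.pow Y)
      rw [hYo.neg_one_pow, hZe.neg_one_pow] at this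
      exact this
    have e2 : IsUnit E :=
      ((isCoprime_of_modEq_two hlo e1).pow_right (n := x)).isUnit_of_dvd' dvd_rfl hElx
    have e3 : E = 1 := by
      rcases Int.isUnit_iff.1 e2 with h | h <;> omega
    have e4 : E ≡ 2 [ZMOD a] := by
      obtain ⟨W, hW⟩ := hZe
      have e5 : c ^ Z ≡ 1 [ZMOD a] := by
        rw [hW, ← two_mul, pow_mul]; simpa using hca.pow W
      have := e5.sub (hba1.pow Y)
      rw [hYo.neg_one_pow] at this
      rw [hE']
      exact this
    rw [e3] at e4
    have := Int.le_of_dvd (by norm_num) e4.dvd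
    linarith
  have hDkx : D ∣ k ^ x := by
    have e1 : D ≡ -2 [ZMOD l] := by
      rw [hD]
      have := (hcl.pow Z).add (hbl.pow Y)
      rw [hYo.neg_one_pow, hZo.neg_one_pow] at this
      exact this
    exact ((isCoprime_of_modEq_neg_two hlo e1).pow_right (n := x)).dvd_of_dvd_mul_right
      (hDE ▸ Dvd.intro _ rfl)
  obtain ⟨hDk, hEl⟩ := eq_and_eq_of_dvd_of_mul_eq (pow_pos hk0 x) (pow_pos hl0 x) hDkx hElx hE0 hDE
  refine ⟨Y, Z, rfl, rfl, ?_, ?_⟩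
  · rw [← hk, ← hl, ← hb, ← hDk, ← hEl, hD, hE']; ring
  · rw [← hk, ← hl, ← hc, ← hDk, ← hEl, hD, hE']; ring

lemma pos_final (f g : ℤ) (hg : 0 < g) (hfg : g < f) (hE : f ^ 2 - 2 * f * g - g ^ 2 = 1)
    (hf : Odd f) (hge : Even g) (x Y Z : ℕ) (hx : 0 < x) (hY : 0 < Y)
    (hdiff : (f + g) ^ x - (f - g) ^ x = 2 * (2 * f * g) ^ Y)
    (hsum : (f + g) ^ x + (f - g) ^ x = 2 * (f ^ 2 + g ^ 2) ^ Z) :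
    x = 2 ∧ Y = 1 ∧ Z = 1 := by
  obtain ⟨b, hb⟩ : ∃ b, b = 2 * f * g := ⟨_, rfl⟩
  obtain ⟨c, hc⟩ : ∃ c, c = f ^ 2 + g ^ 2 := ⟨_, rfl⟩
  obtain ⟨k, hk⟩ : ∃ k, k = f + g := ⟨_, rfl⟩
  obtain ⟨l, hl⟩ : ∃ l, l = f - g := ⟨_, rfl⟩
  rw [← hk, ← hl, ← hb] at hdiff
  rw [← hk, ← hl, ← hc] at hsum
  have hkl : b + 1 = k * l := by rw [hb, hk, hl]; linear_combination -hE
  have hl0 : 0 < l := by omega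
  have hlk : l < k := by omega
  have hko : Odd k := by rw [hk]; exact hf.add_even hge
  have hlo : Odd l := by rw [hl]; exact hf.sub_even hge
  have hb4 : 4 ≤ b := by rw [hb]; nlinarith
  have hc0 : 0 < c := by rw [hc]; positivity
  -- the 2-adic valuation of `k ^ x - l ^ x` excludes odd `x`
  obtain ⟨X, rfl⟩ : ∃ X, x = 2 * X := by
    rcases Nat.even_or_odd' x with ⟨X, h' | h'⟩
    · exact ⟨X, h'⟩
    exfalso
    apply not_two_mul_dvd hko hlo ⟨X, h'⟩ hlk.ne'
    rw [hdiff]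
    obtain ⟨t, ht⟩ := dvd_pow_self b hY.ne'
    exact ⟨f * t, by rw [ht, hk, hl, hb]; ring⟩
  have hX : 0 < X := by omega
  have hkl2 : k ^ 2 - l ^ 2 = 2 * b := by rw [hk, hl, hb]; ring
  have hXo : Odd X := by
    rw [← Nat.not_even_iff_odd]
    rintro ⟨m, hm⟩
    have e1 : (l ^ X) * 2 ≡ k ^ X + l ^ X [ZMOD 2 * b] := by
      have : l ^ X ≡ k ^ X [ZMOD 2 * b] := by
        rw [hm, ← two_mul, pow_mul, pow_mul]
        apply Int.ModEq.pow
        rw [Int.modEq_iff_dvd, hkl2]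
      have := this.add_right (l ^ X)
      rwa [← mul_two] at this
    obtain ⟨t, ht⟩ := e1.dvd
    obtain ⟨w, hw⟩ : ∃ w, w = l ^ X + b * t := ⟨_, rfl⟩
    have hw2 : k ^ X + l ^ X = 2 * w := by rw [hw]; linarith
    have hlb : IsCoprime l b := ⟨k, -1, by linarith⟩
    have hwb : IsCoprime w b := by
      rw [hw]
      exact IsCoprime.add_mul_left_left (hlb.pow_left) t
    have hwd : w ∣ b ^ Y := by
      refine ⟨k ^ X - l ^ X, ?_⟩
      have : (2 : ℤ) * b ^ Y = 2 * (w * (k ^ X - l ^ X)) := by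
        rw [← hdiff, ← mul_assoc, ← hw2, mul_comm 2 X, pow_mul, pow_mul]; ring
      linarith
    have hu : IsUnit w := (hwb.pow_right (n := Y)).isUnit_of_dvd' dvd_rfl hwd
    have h1 : 0 < l ^ X := by positivity
    have h2 : l ^ X < k ^ X := pow_lt_pow_left₀ hlk hl0.le hX.ne'
    rcases Int.isUnit_iff.1 hu with h | h <;> omega
  have hY1 : Y = 1 := by
    by_contra hne
    have hk2 : Odd (k ^ 2) := hko.pow
    have hl2 : Odd (l ^ 2) := hlo.pow
    apply not_two_mul_dvd hk2 hl2 hXo (by intro h; rw [h] at hkl2; linarith)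
    rw [← pow_mul, ← pow_mul, hdiff, hkl2]
    obtain ⟨t, ht⟩ := pow_dvd_pow b (show 2 ≤ Y by omega)
    exact ⟨f * g * t, by rw [ht, pow_two]; nth_rewrite 2 [hb]; ring⟩
  subst hY1
  have hX1 : X = 1 := by
    by_contra hne
    obtain ⟨n, rfl⟩ : ∃ n, X = n + 1 + 1 := ⟨X - 2, by omega⟩
    have e1 : (l ^ 2) ^ (n + 1) ≤ (k ^ 2) ^ (n + 1) :=
      pow_le_pow_left₀ (by positivity) (pow_le_pow_left₀ hl0.le hlk.le 2) _
    have e2 : (2 : ℤ) ≤ (k ^ 2) ^ (n + 1) := by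
      have : (2 : ℤ) ≤ k ^ 2 := by nlinarith
      calc (2 : ℤ) ≤ k ^ 2 := this
        _ ≤ _ := le_self_pow₀ (by linarith) (by omega)
    rw [pow_mul, pow_mul, pow_succ, pow_succ (l ^ 2), pow_one, ← hkl2] at hdiff
    have e3 : 0 < l ^ 2 := by positivity
    have e4 : 0 < k ^ 2 - l ^ 2 := by linarith
    have e5 := mul_le_mul_of_nonneg_right e1 e3.le
    have e6 := mul_le_mul_of_nonneg_right e2 e4.le
    linarith
  subst hX1
  have hZ1 : c ^ Z = c ^ 1 := by
    have : k ^ 2 + l ^ 2 = 2 * c := by rw [hk, hl, hc]; ring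
    simp only [mul_one] at hsum
    linarith
  have := pow_right_injective₀ hc0 (by nlinarith) hZ1
  exact ⟨rfl, rfl, this⟩

/-! ### The case `b = a + 1` -/

/-- Determination of the two factors of `(2 * f * g) ^ y = c ^ z - a ^ x` as a difference of two
squares. -/
lemma neg_reduce (f g : ℤ) (hg : 0 < g) (hfg : g < f) (hE : f ^ 2 - 2 * f * g - g ^ 2 = -1)
    (hf : Even f) (hgo : Odd g) (x y z : ℕ) (hx : 0 < x) (hy : 0 < y)
    (h : (f ^ 2 - g ^ 2) ^ x + (2 * f * g) ^ y = (f ^ 2 + g ^ 2) ^ z) :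
    ∃ X Z D, x = 2 * X ∧ z = 2 * Z ∧ Odd X ∧ Odd Z ∧ 4 * D = (2 * f) ^ y ∧
      (f ^ 2 + g ^ 2) ^ Z = D + g ^ y ∧ (f ^ 2 - g ^ 2) ^ X = D - g ^ y := by
  obtain ⟨a, ha⟩ : ∃ a, a = f ^ 2 - g ^ 2 := ⟨_, rfl⟩
  obtain ⟨b, hb⟩ : ∃ b, b = 2 * f * g := ⟨_, rfl⟩
  obtain ⟨c, hc⟩ : ∃ c, c = f ^ 2 + g ^ 2 := ⟨_, rfl⟩
  rw [← ha, ← hb, ← hc] at h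
  have hf0 : 0 < f := by linarith
  have h2gf : 2 * g ≤ f := by
    by_contra! hlt
    nlinarith
  have hab : b = a + 1 := by rw [ha, hb]; linarith
  have hb4 : 4 ≤ b := by rw [hb]; nlinarith
  have ha3 : 3 * g ^ 2 ≤ a := by rw [ha]; nlinarith
  have hc2 : c ^ 2 = a ^ 2 + b ^ 2 := by rw [ha, hb, hc]; ring
  have hcb : c ^ 2 ≡ 1 [ZMOD b] := by
    apply Int.ModEq.symm
    rw [Int.modEq_iff_dvd]
    exact ⟨2 * b - 2, by rw [hc2, hab]; ring⟩
  have hca : c ^ 2 ≡ 1 [ZMOD a] := by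
    apply Int.ModEq.symm
    rw [Int.modEq_iff_dvd]
    exact ⟨2 * a + 2, by rw [hc2, hab]; ring⟩
  have hba1 : b ≡ 1 [ZMOD a] := by
    rw [hab]; simp [Int.ModEq]
  have hab1 : a ≡ -1 [ZMOD b] := by
    apply Int.ModEq.symm
    rw [Int.modEq_iff_dvd]
    exact ⟨1, by rw [hab]; ring⟩
  have hcag : c = a + 2 * g ^ 2 := by rw [ha, hc]; ring
  -- the exponent of `c` is even, by reduction modulo `a`
  obtain ⟨Z, rfl⟩ : ∃ Z, z = 2 * Z := by
    rcases Nat.even_or_odd' z with ⟨Z, h' | h'⟩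
    · exact ⟨Z, h'⟩
    exfalso
    have e1 : c ^ z ≡ c [ZMOD a] := by
      rw [h', pow_succ, pow_mul]
      simpa using (hca.pow Z).mul_right c
    have e2 : c ^ z ≡ 1 [ZMOD a] := by
      rw [← h]
      have := ((Int.modEq_zero_iff_dvd.2 (dvd_pow_self a hx.ne'))).add (hba1.pow y)
      simpa using this
    have e3 := (e2.symm.trans e1).dvd
    have e4 : c - 1 = a + (2 * g ^ 2 - 1) := by rw [hcag]; ring
    rw [e4] at e3
    have e5 : a ∣ 2 * g ^ 2 - 1 := (dvd_add_right dvd_rfl).1 e3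
    have := Int.le_of_dvd (by nlinarith) e5
    nlinarith
  have hcZ : c ^ (2 * Z) ≡ 1 [ZMOD b] := by
    rw [pow_mul]; simpa using hcb.pow Z
  obtain ⟨X, rfl⟩ : ∃ X, x = 2 * X := by
    rcases Nat.even_or_odd' x with ⟨X, h' | h'⟩
    · exact ⟨X, h'⟩
    exfalso
    have e1 : a ^ x ≡ -1 [ZMOD b] := by
      have := hab1.pow x
      rwa [Odd.neg_one_pow ⟨X, h'⟩] at this
    have e2 : c ^ (2 * Z) ≡ -1 [ZMOD b] := by
      rw [← h]
      have := e1.add ((Int.modEq_zero_iff_dvd.2 (dvd_pow_self b hy.ne')))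
      simpa using this
    have e3 := (e2.symm.trans hcZ).dvd
    have := Int.le_of_dvd (by norm_num) e3
    linarith
  have hX : 0 < X := by omega
  have ha0 : 0 < a := by linarith
  have hc0 : 0 < c := by rw [hc]; positivity
  have haX : 0 < a ^ X := by positivity
  have hc1 : c ≡ 1 [ZMOD 2 * f] := by
    apply Int.ModEq.symm
    rw [Int.modEq_iff_dvd]
    exact ⟨f - g, by rw [hc]; linear_combination -hE⟩
  have ha1 : a ≡ -1 [ZMOD 2 * f] := by
    apply Int.ModEq.symm
    rw [Int.modEq_iff_dvd]
    exact ⟨g, by rw [← hb]; linarith⟩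
  have hcg : c ≡ -1 [ZMOD g] := by
    apply Int.ModEq.symm
    rw [Int.modEq_iff_dvd]
    exact ⟨2 * f + 2 * g, by rw [hc]; linear_combination hE⟩
  have hag : a ≡ -1 [ZMOD g] := by
    apply Int.ModEq.symm
    rw [Int.modEq_iff_dvd]
    exact ⟨2 * f, by rw [ha]; linear_combination hE⟩
  have hao : Odd a := by
    rw [ha]; exact (hf.pow_of_ne_zero two_ne_zero).sub_odd hgo.pow
  have hco : Odd c := by
    rw [hc]; exact (hf.pow_of_ne_zero two_ne_zero).add_odd hgo.pow
  obtain ⟨D, hD⟩ : ∃ D, c ^ Z + a ^ X = 2 * D := (hco.pow.add_odd hao.pow).two_dvd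
  obtain ⟨E, hE'⟩ : ∃ E, c ^ Z - a ^ X = 2 * E := (hco.pow.sub_odd hao.pow).two_dvd
  have hDE : 4 * D * E = (2 * f) ^ y * g ^ y := by
    rw [← mul_pow, ← hb]
    have : b ^ y = (c ^ Z) ^ 2 - (a ^ X) ^ 2 := by
      rw [← pow_mul, ← pow_mul, mul_comm Z, mul_comm X]; linarith
    rw [this]
    linear_combination (-2 * E) * hD - (c ^ Z + a ^ X) * hE'
  have hD0 : 0 < D := by
    have : 0 < c ^ Z := by positivity
    linarith
  have hE0 : 0 < E := by
    have : 0 < (4 * D) * E := by rw [hDE]; positivity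
    exact (pos_iff_pos_of_mul_pos this).1 (by linarith)
  have hED : E < D := by linarith
  have hcZ1 : c ^ Z ≡ 1 [ZMOD 2 * f] := by simpa using hc1.pow Z
  -- a number `T` with `2 * T ≡ 2` modulo `2 * f` is prime to `2 * f`, because `f` is even
  have key : ∀ T : ℤ, 2 * T ≡ 2 [ZMOD 2 * f] → IsCoprime T (2 * f) := by
    intro T hT
    obtain ⟨t, ht⟩ := hT.symm.dvd
    have e : IsCoprime T f := ⟨1, -t, by linarith⟩
    have e2 : IsCoprime T 2 := e.of_isCoprime_of_dvd_right hf.two_dvd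
    exact e2.mul_right e
  have hXo : Odd X := by
    rw [← Nat.not_even_iff_odd]
    intro hXe
    have e1 : 2 * D ≡ 2 [ZMOD 2 * f] := by
      rw [← hD]
      have := hcZ1.add (ha1.pow X)
      rw [hXe.neg_one_pow] at this
      exact this
    have e2 : D ∣ g ^ y := ((key D e1).pow_right (n := y)).dvd_of_dvd_mul_left
      (hDE ▸ ⟨4 * E, by ring⟩)
    have e3 := Int.le_of_dvd (by positivity) e2
    have e4 : 4 * g ^ y ≤ (2 * f) ^ y := by
      calc 4 * g ^ y ≤ 4 ^ y * g ^ y :=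
            mul_le_mul_of_nonneg_right (le_self_pow₀ (by norm_num) hy.ne') (by positivity)
        _ = (4 * g) ^ y := (mul_pow _ _ _).symm
        _ ≤ (2 * f) ^ y := pow_le_pow_left₀ (by linarith) (by linarith) _
    have e5 : 0 < g ^ y := by positivity
    nlinarith
  have hEg : E ∣ g ^ y := by
    have e1 : 2 * E ≡ 2 [ZMOD 2 * f] := by
      rw [← hE']
      have := hcZ1.sub (ha1.pow X)
      rw [hXo.neg_one_pow] at this
      exact this
    exact ((key E e1).pow_right (n := y)).dvd_of_dvd_mul_left (hDE ▸ Dvd.intro_left _ rfl)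
  have hZo : Odd Z := by
    rw [← Nat.not_even_iff_odd]
    intro hZe
    have e1 : 2 * E ≡ 2 [ZMOD g] := by
      rw [← hE']
      have := (hcg.pow Z).sub (hag.pow X)
      rw [hXo.neg_one_pow, hZe.neg_one_pow] at this
      exact this
    have e2 : IsUnit E :=
      ((isCoprime_of_modEq_two hgo e1).of_mul_left_right.pow_right (n := y)).isUnit_of_dvd'
        dvd_rfl hEg
    have e3 : E = 1 := by
      rcases Int.isUnit_iff.1 e2 with h | h <;> omega
    have e4 : 2 * E ≡ 1 [ZMOD a] := by
      obtain ⟨W, hW⟩ := hZe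
      have e5 : c ^ Z ≡ 1 [ZMOD a] := by
        rw [hW, ← two_mul, pow_mul]; simpa using hca.pow W
      have := e5.sub ((Int.modEq_zero_iff_dvd.2 (dvd_pow_self a hX.ne')))
      rw [hE'] at this
      simpa using this
    rw [e3] at e4
    have := Int.le_of_dvd (by norm_num) e4.symm.dvd
    linarith
  have hDf : 4 * D ∣ (2 * f) ^ y := by
    have e1 : 2 * D ≡ -2 [ZMOD g] := by
      rw [← hD]
      have := (hcg.pow Z).add (hag.pow X)
      rw [hXo.neg_one_pow, hZo.neg_one_pow] at this
      exact this
    have e2 : IsCoprime (2 * D) g := isCoprime_of_modEq_neg_two hgo e1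
    have e3 : IsCoprime (4 * D) g := by
      have : (4 * D) = 2 * (2 * D) := by ring
      rw [this]
      exact e2.of_mul_left_left.mul_left e2
    exact (e3.pow_right (n := y)).dvd_of_dvd_mul_right (hDE ▸ Dvd.intro _ rfl)
  obtain ⟨hDf', hEg'⟩ := eq_and_eq_of_dvd_of_mul_eq (by positivity) (by positivity) hDf hEg hE0 hDE
  refine ⟨X, Z, D, rfl, rfl, hXo, hZo, hDf', ?_, ?_⟩
  · rw [← hc, ← hEg']; linarith
  · rw [← ha, ← hEg']; linarith

/-- The factor `f / 2` of `(2 * f) ^ 3 / 4 = (2 * f) ^ 2 * (f / 2)` is an integer. -/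
lemma dvd_of_four_mul_eq {f D : ℤ} {y : ℕ} (hf : Even f) (hy : 3 ≤ y)
    (hD : 4 * D = (2 * f) ^ y) : ∃ t, D = (2 * f) ^ 2 * t := by
  obtain ⟨t, ht⟩ := pow_dvd_pow (2 * f) hy
  obtain ⟨r, hr⟩ := hf
  refine ⟨r * t, ?_⟩
  have : 4 * D = 4 * ((2 * f) ^ 2 * (r * t)) := by
    rw [hD, ht, hr]; ring
  linarith

lemma neg_odd (f g D : ℤ) (hg : 0 < g) (hfg : g < f) (hE : f ^ 2 - 2 * f * g - g ^ 2 = -1)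
    (hf : Even f) (y Z : ℕ) (hy : 3 ≤ y) (hyo : Odd y) (hZo : Odd Z)
    (hD : 4 * D = (2 * f) ^ y) (hcs : (f ^ 2 + g ^ 2) ^ Z = D + g ^ y) : False := by
  obtain ⟨t, hDt⟩ := dvd_of_four_mul_eq hf hy hD
  obtain ⟨c, hc⟩ : ∃ c, c = f ^ 2 + g ^ 2 := ⟨_, rfl⟩
  rw [← hc] at hcs
  have hc1 : c ≡ 1 [ZMOD f] := by
    apply Int.ModEq.symm
    rw [Int.modEq_iff_dvd]
    exact ⟨2 * (f - g), by rw [hc]; linear_combination -hE⟩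
  obtain ⟨w, hw⟩ := hyo
  have hg2 : g ^ 2 ≡ 1 [ZMOD f] := by
    apply Int.ModEq.symm
    rw [Int.modEq_iff_dvd]
    exact ⟨f - 2 * g, by linear_combination -hE⟩
  have e1 : g ^ y ≡ g [ZMOD f] := by
    rw [hw, pow_succ, pow_mul]
    simpa using (hg2.pow w).mul_right g
  have e2 : g ^ y ≡ 1 [ZMOD f] := by
    have e3 : c ^ Z ≡ 1 [ZMOD f] := by simpa using hc1.pow Z
    have e4 : D ≡ 0 [ZMOD f] :=
      Int.modEq_zero_iff_dvd.2 ⟨4 * f * t, by rw [hDt]; ring⟩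
    have := e3.sub e4
    rw [hcs] at this
    simpa using this
  have e5 := (e2.symm.trans e1).dvd
  have hg1 : g = 1 := by
    by_contra hne
    have := Int.le_of_dvd (by omega) e5
    linarith
  subst hg1
  have hf2 : f = 2 := by nlinarith
  subst hf2
  have hc5 : c = 5 := by rw [hc]; norm_num
  obtain ⟨m, hm⟩ := hZo
  have e6 : c ^ Z ≡ 5 [ZMOD 8] := by
    have : (5 : ℤ) ^ 2 ≡ 1 [ZMOD 8] := by decide
    rw [hc5, hm, pow_succ, pow_mul]
    simpa using (this.pow m).mul_right 5
  rw [hcs, hDt, one_pow] at e6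
  obtain ⟨s, hs⟩ := e6.dvd
  omega

/-- For `y ≥ 3` the exponents `X` and `Z` differ by a nonzero multiple of `f`, so one of them is at
least `f`, and then the size of `(2 * f) ^ y` makes `y` larger still
(for `g = 1` one has `f = 2` and the bound is `hy`). -/
lemma neg_exponent_large (f g D : ℤ) (hg : 0 < g) (hfg : g < f)
    (hE : f ^ 2 - 2 * f * g - g ^ 2 = -1) (hf : Even f) (X y Z : ℕ) (hy : 3 ≤ y)
    (hXo : Odd X) (hZo : Odd Z) (hD : 4 * D = (2 * f) ^ y)
    (hcs : (f ^ 2 + g ^ 2) ^ Z = D + g ^ y) (has : (f ^ 2 - g ^ 2) ^ X = D - g ^ y) :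
    f + 1 ≤ y := by
  obtain ⟨t, hDt⟩ := dvd_of_four_mul_eq hf hy hD
  obtain ⟨a, ha⟩ : ∃ a, a = f ^ 2 - g ^ 2 := ⟨_, rfl⟩
  obtain ⟨c, hc⟩ : ∃ c, c = f ^ 2 + g ^ 2 := ⟨_, rfl⟩
  rw [← hc] at hcs
  rw [← ha] at has
  have hf0 : 0 < f := by linarith
  have hafg : a = 2 * f * g - 1 := by rw [ha]; linarith
  have ha0 : 0 < a := by rw [ha]; nlinarith
  have haX : 0 < a ^ X := by positivity
  have hfy : 0 < (2 * f) ^ y := by positivity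
  -- comparison modulo `(2 * f) ^ 2` forces `X` and `Z` apart
  have hXZ : X ≠ Z ∧ f ∣ (X : ℤ) - Z := by
    have e1 : c = 1 + (2 * f) * (f - g) := by rw [hc]; linear_combination -hE
    have e2 : a = -(1 + (2 * f) * (-g)) := by rw [hafg]; ring
    have e3 := one_add_pow_modEq (2 * f) Z (f - g)
    have e4 := one_add_pow_modEq (2 * f) X (-g)
    rw [← e1] at e3
    have e5 : (1 + (2 * f) * (-g)) ^ X = - a ^ X := by
      rw [e2, hXo.neg_pow, neg_neg]
    rw [e5] at e4
    have e6 : (c ^ Z - -a ^ X) ≡ 0 [ZMOD (2 * f) ^ 2] :=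
      Int.modEq_zero_iff_dvd.2 ⟨2 * t, by
        rw [sub_neg_eq_add, hcs, has, hDt]; ring⟩
    have e7 := (e3.sub e4).symm.trans e6
    have e8 := Int.modEq_zero_iff_dvd.1 e7
    have e9 : 2 * f ∣ (f - g) * Z + g * X := by
      have : (2 * f) * (2 * f) ∣ (2 * f) * ((f - g) * Z + g * X) := by
        rw [← pow_two]
        convert e8 using 1
        ring
      exact (mul_dvd_mul_iff_left (by positivity)).1 this
    constructor
    · intro hne
      rw [hne] at e9
      have : f * 2 ∣ f * Z := by
        rw [mul_comm]
        convert e9 using 1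
        ring
      have := (mul_dvd_mul_iff_left hf0.ne').1 this
      obtain ⟨m, hm⟩ := hZo
      omega
    · have e10 : f ∣ (f - g) * Z + g * X := (Dvd.intro_left 2 rfl).trans e9
      have e11 : f ∣ g * ((X : ℤ) - Z) := by
        have : (f - g) * Z + g * X = f * Z + g * ((X : ℤ) - Z) := by ring
        rw [this] at e10
        exact (dvd_add_right (Dvd.intro _ rfl)).1 e10
      have hcop : IsCoprime f g := ⟨-(f - 2 * g), g, by linear_combination -hE⟩
      exact hcop.dvd_of_dvd_mul_left e11
  by_cases hg1 : g = 1
  · have : f = 2 := by subst hg1; nlinarith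
    omega
  have hg2 : 2 ≤ g := by omega
  have e1 : 2 * f ≤ a := by
    rw [hafg]; nlinarith
  have e2 : a ≤ c := by rw [ha, hc]; nlinarith
  have e3 : c ^ Z < (2 * f) ^ y := by linarith
  have e4 : a ^ X < (2 * f) ^ y := by
    have : 0 < g ^ y := by positivity
    linarith
  have e5 : Z < y := by
    rw [← pow_lt_pow_iff_right₀ (show 1 < 2 * f by linarith)]
    exact (pow_le_pow_left₀ (by linarith) (e1.trans e2) Z).trans_lt e3
  have e6 : X < y := by
    rw [← pow_lt_pow_iff_right₀ (show 1 < 2 * f by linarith)]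
    exact (pow_le_pow_left₀ (by linarith) e1 X).trans_lt e4
  have e7 : f ≤ |(X : ℤ) - Z| := by
    apply Int.le_of_dvd
    · rw [abs_pos]; have := hXZ.1; omega
    · exact (dvd_abs _ _).2 hXZ.2
  rcases abs_cases ((X : ℤ) - Z) with h | h <;> omega

lemma neg_even (f g D : ℤ) (hg : 0 < g) (hfg : g < f)
    (hE : f ^ 2 - 2 * f * g - g ^ 2 = -1) (hf : Even f) (hgo : Odd g) (X y : ℕ) (hye : Even y)
    (hXo : Odd X) (hD : 4 * D = (2 * f) ^ y) (has : (f ^ 2 - g ^ 2) ^ X = D - g ^ y)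
    (hyf : f + 1 ≤ y) : False := by
  obtain ⟨Y, hY⟩ := hye
  obtain ⟨a, ha⟩ : ∃ a, a = f ^ 2 - g ^ 2 := ⟨_, rfl⟩
  rw [← ha] at has
  have hf0 : 0 < f := by linarith
  have hafg : a + 1 = 2 * f * g := by rw [ha]; linarith
  have ha0 : 0 < a := by rw [ha]; nlinarith
  have haX : 0 < a ^ X := by positivity
  have hao : Odd a := by
    rw [ha]; exact (hf.pow_of_ne_zero two_ne_zero).sub_odd hgo.pow
  have h2gf : 2 * g ≤ f := by
    by_contra! hlt
    nlinarith
  -- factor `a ^ X` as a difference of two squares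
  obtain ⟨m, hm⟩ : ∃ m, (2 * f) ^ Y = 2 * m :=
    (Dvd.intro _ rfl : (2 : ℤ) ∣ 2 * f).trans (dvd_pow_self _ (by omega))
  have hDm : D = m ^ 2 := by
    rw [hY, ← two_mul, mul_comm 2 Y, pow_mul, hm] at hD
    linarith
  have hm0 : 0 < m := by
    have : 0 < (2 * f) ^ Y := by positivity
    linarith
  have hfac : (m + g ^ Y) * (m - g ^ Y) = a ^ X := by
    rw [has, hDm, hY, ← two_mul, mul_comm 2 Y, pow_mul]; ring
  have hGY : 0 < g ^ Y := by positivity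
  have hmG : 0 < m - g ^ Y := by
    have : 0 < (m + g ^ Y) * (m - g ^ Y) := by rw [hfac]; exact haX
    exact (pos_iff_pos_of_mul_pos this).1 (by linarith)
  have hcop2 : IsCoprime (m + g ^ Y) (m - g ^ Y) := by
    have e1 : IsCoprime (2 * f) g := by
      have h1 : IsCoprime f g := ⟨-(f - 2 * g), g, by linear_combination -hE⟩
      have h2 : IsCoprime 2 g := by
        obtain ⟨r, hr⟩ := hgo
        exact ⟨-r, 1, by rw [hr]; ring⟩
      exact h2.mul_left h1
    have e2 : IsCoprime ((2 * f) ^ Y) (g ^ Y) := e1.pow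
    rw [hm] at e2
    have e3 : IsCoprime (2 * m) (m + g ^ Y) := by
      have h1 : IsCoprime m (m + g ^ Y) := by
        have := e2.of_mul_left_right.add_mul_left_right 1
        rwa [mul_one, add_comm] at this
      have h2 : IsCoprime 2 (m + g ^ Y) := by
        have : Odd (m + g ^ Y) := by
          have : Odd (a ^ X) := hao.pow
          rw [← hfac] at this
          exact (Int.odd_mul.1 this).1
        obtain ⟨r, hr⟩ := this
        exact ⟨-r, 1, by rw [hr]; ring⟩
      exact h2.mul_left h1
    have e4 := e3.symm.add_mul_left_right (-1)
    have : 2 * m + (m + g ^ Y) * (-1) = m - g ^ Y := by ring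
    rwa [this] at e4
  obtain ⟨p, hp⟩ := Int.eq_pow_of_mul_eq_pow_odd_left hcop2 hXo hfac
  obtain ⟨q, hq⟩ := Int.eq_pow_of_mul_eq_pow_odd_right hcop2 hXo hfac
  have hp0 : 0 < p := by
    rw [← hXo.pow_pos_iff, ← hp]; linarith
  have hq0 : 0 < q := by
    rw [← hXo.pow_pos_iff, ← hq]; exact hmG
  have hpq : p * q = a := by
    apply hXo.strictMono_pow.injective
    simp only
    rw [mul_pow, ← hp, ← hq, hfac]
  have hpqo : Odd p ∧ Odd q := Int.odd_mul.1 (hpq ▸ hao)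
  have hsum : p ^ X + q ^ X = (2 * f) ^ Y := by rw [← hp, ← hq, hm]; ring
  have hdvd : (2 : ℤ) ^ y ∣ p - (-q) := by
    apply two_adic hpqo.1 hpqo.2.neg hXo
    rw [hXo.neg_pow, sub_neg_eq_add, hsum, hY, ← two_mul, pow_mul]
    apply pow_dvd_pow_of_dvd
    obtain ⟨r, hr⟩ := hf
    exact ⟨r, by rw [hr]; ring⟩
  have hle := Int.le_of_dvd (by linarith) hdvd
  have hpq1 : p + q ≤ a + 1 := by rw [← hpq]; nlinarith
  have hbf : 2 * f * g ≤ f ^ 2 := by nlinarith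
  have hfin : (2 : ℤ) ^ y ≤ f ^ 2 := by linarith
  lift f to ℕ using hf0.le
  have e1 : f + 1 ≤ y := by exact_mod_cast hyf
  have e2 : 2 ^ y ≤ f ^ 2 := by exact_mod_cast hfin
  have e3 : 2 ^ (f + 1) ≤ 2 ^ y := Nat.pow_le_pow_right (by norm_num) e1
  have e4 : ∀ n : ℕ, n ^ 2 < 2 ^ (n + 1) := by
    intro n
    induction n with
    | zero => norm_num
    | succ n ih =>
      rcases Nat.lt_or_ge n 3 with h | h
      · interval_cases n <;> norm_num
      · rw [pow_succ 2 (n + 1)]; nlinarith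
  have := e4 f
  omega

lemma neg_final (f g D : ℤ) (hg : 0 < g) (hfg : g < f)
    (hE : f ^ 2 - 2 * f * g - g ^ 2 = -1) (hf : Even f) (hgo : Odd g) (X y Z : ℕ) (hy : 0 < y)
    (hXo : Odd X) (hZo : Odd Z) (hD : 4 * D = (2 * f) ^ y)
    (hcs : (f ^ 2 + g ^ 2) ^ Z = D + g ^ y) (has : (f ^ 2 - g ^ 2) ^ X = D - g ^ y) :
    X = 1 ∧ y = 2 ∧ Z = 1 := by
  have ha1 : 1 < f ^ 2 - g ^ 2 := by nlinarith
  have hc1 : f < f ^ 2 + g ^ 2 := by nlinarith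
  have hgy : 0 < g ^ y := by positivity
  have hy1 : y ≠ 1 := by
    rintro rfl
    have e1 : f ^ 2 + g ^ 2 ≤ (f ^ 2 + g ^ 2) ^ Z := le_self_pow₀ (by linarith) hZo.pos.ne'
    have e2 : 0 < (f ^ 2 - g ^ 2) ^ X := by positivity
    rw [pow_one] at hD
    linarith
  by_cases hy2 : y = 2
  · subst hy2
    have eD : D = f ^ 2 := by
      have : 4 * D = 4 * f ^ 2 := by rw [hD]; ring
      linarith
    rw [eD] at hcs has
    refine ⟨?_, rfl, ?_⟩
    · exact pow_right_injective₀ (by linarith) ha1.ne' (has.trans (pow_one _).symm)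
    · exact pow_right_injective₀ (by linarith) (by linarith) (hcs.trans (pow_one _).symm)
  exfalso
  have hy3 : 3 ≤ y := by omega
  rcases Nat.even_or_odd y with hye | hyo
  · exact neg_even f g D hg hfg hE hf hgo X y hye hXo hD has
      (neg_exponent_large f g D hg hfg hE hf X y Z hy3 hXo hZo hD hcs has)
  · exact neg_odd f g D hg hfg hE hf y Z hy3 hyo hZo hD hcs

/-! ### The equation -/

theorem stmt_10 (f g : ℕ) (hg : 0 < g) (hfg : g < f) (hcop : Nat.Coprime f g)
    (heven : 2 ∣ f * g)
    (hmiy : (f : ℤ) ^ 2 - 2 * f * g - g ^ 2 = 1 ∨ (f : ℤ) ^ 2 - 2 * f * g - g ^ 2 = -1)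
    (x y z : ℕ) (hx : 0 < x) (hy : 0 < y) (hz : 0 < z) :
    (f ^ 2 - g ^ 2) ^ x + (2 * f * g) ^ y = (f ^ 2 + g ^ 2) ^ z ↔
      (x, y, z) = (2, 2, 2) := by
  have hle : g ^ 2 ≤ f ^ 2 := Nat.pow_le_pow_left hfg.le 2
  have hg' : (0 : ℤ) < g := by exact_mod_cast hg
  have hfg' : (g : ℤ) < f := by exact_mod_cast hfg
  constructor
  · intro h
    zify [hle] at h
    have hev : Even ((f : ℤ) * g) := by
      rw [even_iff_two_dvd]; exact_mod_cast heven
    obtain ⟨w, hw⟩ := hev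
    -- the parities of `f` and `g` follow from `hm` modulo `4`, as `f * g` is even
    rcases hmiy with hm | hm
    · have hpar : Odd (f : ℤ) ∧ Even (g : ℤ) := by
        rcases Int.even_or_odd' (f : ℤ) with ⟨r, hr | hr⟩ <;>
        rcases Int.even_or_odd' (g : ℤ) with ⟨s, hs | hs⟩
        · exfalso; rw [hr, hs] at hm; ring_nf at hm; omega
        · exfalso
          have : 4 * (r ^ 2 - s ^ 2 - s - w) = 2 := by
            rw [hr, hs] at hm hw; linear_combination hm + 2 * hw
          omega
        · exact ⟨⟨r, hr⟩, ⟨s, by omega⟩⟩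
        · exfalso; rw [hr, hs] at hw; ring_nf at hw; omega
      obtain ⟨Y, Z, rfl, rfl, h1, h2⟩ := pos_reduce f g hg' hfg' hm hpar.1 hpar.2 x y z hx hy h
      obtain ⟨rfl, rfl, rfl⟩ := pos_final f g hg' hfg' hm hpar.1 hpar.2 x Y Z hx (by omega) h1 h2
      rfl
    · have hpar : Even (f : ℤ) ∧ Odd (g : ℤ) := by
        rcases Int.even_or_odd' (f : ℤ) with ⟨r, hr | hr⟩ <;>
        rcases Int.even_or_odd' (g : ℤ) with ⟨s, hs | hs⟩
        · exfalso; rw [hr, hs] at hm; ring_nf at hm; omega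
        · exact ⟨⟨r, by omega⟩, ⟨s, hs⟩⟩
        · exfalso
          have : 4 * (r ^ 2 + r - s ^ 2 - w) = -2 := by
            rw [hr, hs] at hm hw; linear_combination hm + 2 * hw
          omega
        · exfalso; rw [hr, hs] at hw; ring_nf at hw; omega
      obtain ⟨X, Z, D, rfl, rfl, hX, hZ, h1, h2, h3⟩ :=
        neg_reduce f g hg' hfg' hm hpar.1 hpar.2 x y z hx hy h
      obtain ⟨rfl, rfl, rfl⟩ :=
        neg_final f g D hg' hfg' hm hpar.1 hpar.2 X y Z hy hX hZ h1 h2 h3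
      rfl
  · intro h
    obtain ⟨rfl, rfl, rfl⟩ : x = 2 ∧ y = 2 ∧ z = 2 := by simpa using h
    zify [hle]
    ring
end
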